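/- Conventions. Throughout, $X'$ is a proper geodesic metric space with a basepoint $x_0'$. For $Q\ge 1$, a $Q$-quasi-geodesic is a continuous map $\gamma\colon I\to X'$ on an interval $I\subseteq\mathbb R$ with $\frac{|t-s|}{Q}-Q\le d(\gamma(s),\gamma(t))\le Q|t-s|+Q$ for all $s,t\in I$. A geodesic is an isometric embedding of a closed interval; a geodesic ray based at $x_0'$ is an isometric embedding $\gamma\colon[0,\infty)\to X'$ with $\gamma(0)=x_0'$. A Morse gauge is a non-decreasing continuous function $M\colon[1,\infty)\to[0,\infty)$. A quasi-geodesic $\gamma$ is $M$-Morse if for every $Q\ge1$, every $Q$-quasi-geodesic with endpoints $\gamma(s)$ and $\gamma(t)$ is contained in the closed $M(Q)$-neighbourhood of $\gamma[s,t]$; it is Morse if it is $M$-Morse for some Morse gauge $M$. The space $X'$ satisfies the Morse local-to-global property if for every $Q\ge1$ and every Morse gauge $M$ there exist a scale $L>0$, a constant $Q'\ge1$ and a Morse gauge $M'$ such that every path $p\colon I\to X'$, all of whose subpaths $p[s,t]$ with $|t-s|\le L$ are $M$-Morse $Q$-quasi-geodesics, is an $M'$-Morse $Q'$-quasi-geodesic.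 The space $X'$ is Gromov hyperbolic if there is $\delta\ge0$ such that each side of every geodesic triangle is contained in the $\delta$-neighbourhood of the union of the other two sides. A geodesic $\gamma$ is $C$-contracting if for every $x\in X'$ the closest-point projection to $\gamma$ of the open ball of radius $d(x,\gamma)$ around $x$ has diameter at most $C$. An action by isometries is geometric if it is proper and cocompact. A strong exhaustion of the Morse boundary of $X'$ is a sequence $(M_n)_{n\in\mathbb N}$ of Morse gauges that is increasing ($M_n\le M_{n+1}$ pointwise for all $n$) such that every Morse geodesic ray based at $x_0'$ is $M_n$-Morse for some $n$, and such that for every Morse gauge $M$ there exists $n=n(M)$ such that every $M$-Morse geodesic ray based at $x_0'$ is $M_n$-Morse. Statement. Let $G$ be a finitely generated group acting geometrically on a proper geodesic metric space $X'$ with basepoint $x_0'$, such that $X'$ is not Gromov hyperbolic and satisfies the Morse local-to-global property. Then for all constants $C_6\ge0$ and $K_0\ge0$ there exist a constant $K\ge K_0$, a strong exhaustion $(M_n)_{n\in\mathbb N}$ of the Morse boundary of $X'$, and a sequence of geodesic segments $\hat\beta_n\colon[0,S_n]\to X'$ with $S_n\ge K$ such that for every $n$: (1) $\hat\beta_n$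 is not $M_n$-Morse; (2) neither $\hat\beta_n[0,K]$ nor $\hat\beta_n[S_n-K,S_n]$ is $C_6$-contracting; (3) $\hat\beta_n(0)$ and $\hat\beta_n(S_n)$ lie in the orbit $G\cdot x_0'$. -/

import Mathlib

namespace MorseLTG

/-- A Morse gauge: a non-decreasing continuous function `[1, ∞) → [0, ∞)`
(only the values on `[1, ∞)` matter). -/
def IsMorseGauge (M : ℝ → ℝ) : Prop :=
  MonotoneOn M (Set.Ici 1) ∧ ContinuousOn M (Set.Ici 1) ∧ ∀ t : ℝ, 1 ≤ t → 0 ≤ M t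

section Space

variable {X : Type*} [MetricSpace X]

/-- The restriction of `γ` to `I ⊆ ℝ` is a (continuous) `Q`-quasi-geodesic. -/
def QGeoOn (Q : ℝ) (I : Set ℝ) (γ : ℝ → X) : Prop :=
  ContinuousOn γ I ∧ ∀ s ∈ I, ∀ t ∈ I,
    |t - s| / Q - Q ≤ dist (γ s) (γ t) ∧ dist (γ s) (γ t) ≤ Q * |t - s| + Q

/-- `γ` is `M`-Morse on `I`: every `Q`-quasi-geodesic with endpoints `γ s` and `γ t`
stays in the closed `M Q`-neighbourhood of `γ[s, t]`. -/
def MorseOn (M : ℝ → ℝ) (I : Set ℝ) (γ : ℝ → X) : Prop :=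
  ∀ Q : ℝ, 1 ≤ Q → ∀ s ∈ I, ∀ t ∈ I, s ≤ t →
    ∀ (lam : ℝ → X) (a b : ℝ), a ≤ b → QGeoOn Q (Set.Icc a b) lam →
      lam a = γ s → lam b = γ t →
      ∀ u ∈ Set.Icc a b, ∃ v ∈ Set.Icc s t, dist (lam u) (γ v) ≤ M Q

/-- `γ` is a geodesic on `I` (an isometric embedding). -/
def GeodesicOn (I : Set ℝ) (γ : ℝ → X) : Prop :=
  ∀ s ∈ I, ∀ t ∈ I, dist (γ s) (γ t) = |t - s|

/-- A geodesic ray based at `x₀`. -/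
def GeodesicRayFrom (x₀ : X) (γ : ℝ → X) : Prop :=
  γ 0 = x₀ ∧ GeodesicOn (Set.Ici 0) γ

/-- `p` is `L`-locally an `M`-Morse `Q`-quasi-geodesic on `I`. -/
def LocMorseQGeoOn (Q : ℝ) (M : ℝ → ℝ) (L : ℝ) (I : Set ℝ) (p : ℝ → X) : Prop :=
  ∀ s ∈ I, ∀ t ∈ I, s ≤ t → t - s ≤ L →
    QGeoOn Q (Set.Icc s t) p ∧ MorseOn M (Set.Icc s t) p

/-- The set of closest-point projections of `x` to `A`. -/
def projSet (A : Set X) (x : X) : Set X :=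
  {y ∈ A | ∀ z ∈ A, dist x y ≤ dist x z}

/-- A subset `A` is `C`-contracting: for every `x`, any two points of the closest-point projection
to `A` of the open ball of radius `d(x, A)` around `x` are at distance at most `C`. -/
def ContractingSet (C : ℝ) (A : Set X) : Prop :=
  ∀ x : X, ∀ y ∈ Metric.ball x (Metric.infDist x A), ∀ y' ∈ Metric.ball x (Metric.infDist x A),
    ∀ p ∈ projSet A y, ∀ p' ∈ projSet A y', dist p p' ≤ C

/-- `Ms` is a strong exhaustion of the Morse boundary of `X` based at `x₀`: a (pointwise)
increasing sequence of Morse gauges such that every Morse geodesic ray based at `x₀` is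
`Ms n`-Morse for some `n`, where `n` can be chosen depending only on the Morse gauge of the ray. -/
def IsStrongExhaustion (x₀ : X) (Ms : ℕ → ℝ → ℝ) : Prop :=
  (∀ n, IsMorseGauge (Ms n)) ∧
  (∀ n, ∀ Q : ℝ, 1 ≤ Q → Ms n Q ≤ Ms (n + 1) Q) ∧
  (∀ γ : ℝ → X, GeodesicRayFrom x₀ γ →
    (∃ M : ℝ → ℝ, IsMorseGauge M ∧ MorseOn M (Set.Ici 0) γ) →
      ∃ n, MorseOn (Ms n) (Set.Ici 0) γ) ∧
  (∀ M : ℝ → ℝ, IsMorseGauge M → ∃ n, ∀ γ : ℝ → X, GeodesicRayFrom x₀ γ →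
    MorseOn M (Set.Ici 0) γ → MorseOn (Ms n) (Set.Ici 0) γ)

end Space

/-- The Morse local-to-global property. -/
def MLTG (X : Type*) [MetricSpace X] : Prop :=
  ∀ Q : ℝ, 1 ≤ Q → ∀ M : ℝ → ℝ, IsMorseGauge M →
    ∃ (L Q' : ℝ) (M' : ℝ → ℝ), 0 < L ∧ 1 ≤ Q' ∧ IsMorseGauge M' ∧
      ∀ I : Set ℝ, I.OrdConnected → ∀ p : ℝ → X,
        LocMorseQGeoOn Q M L I p → QGeoOn Q' I p ∧ MorseOn M' I p

/-- `X` is a geodesic metric space. -/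
def GeodesicSpace (X : Type*) [MetricSpace X] : Prop :=
  ∀ x y : X, ∃ γ : ℝ → X, γ 0 = x ∧ γ (dist x y) = y ∧
    GeodesicOn (Set.Icc 0 (dist x y)) γ

/-- Gromov hyperbolicity via thin geodesic triangles (the sides are traversed cyclically, so
that it is enough to bound one side of each triangle). -/
def GromovHyperbolic (X : Type*) [MetricSpace X] : Prop :=
  ∃ δ : ℝ, 0 ≤ δ ∧
    ∀ (γ₁ γ₂ γ₃ : ℝ → X) (a₁ b₁ a₂ b₂ a₃ b₃ : ℝ),
      a₁ ≤ b₁ → a₂ ≤ b₂ → a₃ ≤ b₃ →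
      GeodesicOn (Set.Icc a₁ b₁) γ₁ → GeodesicOn (Set.Icc a₂ b₂) γ₂ →
        GeodesicOn (Set.Icc a₃ b₃) γ₃ →
      γ₁ b₁ = γ₂ a₂ → γ₂ b₂ = γ₃ a₃ → γ₃ b₃ = γ₁ a₁ →
      ∀ s ∈ Set.Icc a₁ b₁,
        ∃ p ∈ γ₂ '' Set.Icc a₂ b₂ ∪ γ₃ '' Set.Icc a₃ b₃, dist (γ₁ s) p ≤ δ

/-- The action of `G` on `X` is geometric: by isometries, proper (for all compact `K`, `L`, only
finitely many `g` satisfy `g K ∩ L ≠ ∅`) and cocompact. -/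
def IsGeometricAction (G X : Type*) [Group G] [MetricSpace X] [MulAction G X] : Prop :=
  IsIsometricSMul G X ∧ ProperlyDiscontinuousSMul G X ∧
    ∃ K : Set X, IsCompact K ∧ ∀ x : X, ∃ g : G, ∃ k ∈ K, g • k = x

end MorseLTG

/-! In a non-hyperbolic geodesic space there are, for any prescribed gauge, geodesics that are not
Morse for it. Cut such a geodesic `α` at a time up to which the remaining part is still far from
being Morse. If all segments of a fixed length starting before that time were Morse for a fixed
gauge, the local-to-global property would make the part of `α` before it Morse, and hence `α`
itself, being a concatenation of two Morse geodesics. So one can trim `α` at both ends such that it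
remains non-Morse for the prescribed gauge and neither begins nor ends with a Morse segment of that
length.
Now move the endpoints of `α` into the orbit, by a bounded amount. A contracting end of the new
geodesic would be Morse, and so would be the corresponding end of `α`, which fellow travels it.

For the strong exhaustion, approximate an `M`-Morse ray by the orbit. By properness, the group
elements that move the approximation along segments of a fixed length lie in a finite subset of the
group, and by the local-to-global property the rays approximated with steps in that subset are
uniformly Morse. There are only countably many finite subsets of the group. -/

namespace MorseLTG

open Set

/-! ### Morse gauges -/

namespace IsMorseGauge

variable {M N : ℝ → ℝ}

theorem comp (hM : IsMorseGauge M) {φ : ℝ → ℝ} (hmono : MonotoneOn φ (Ici 1))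
    (hcont : ContinuousOn φ (Ici 1)) (hmaps : MapsTo φ (Ici 1) (Ici 1)) : IsMorseGauge (M ∘ φ) :=
  ⟨hM.1.comp hmono hmaps, hM.2.1.comp hcont hmaps, fun _ ht => hM.2.2 _ (hmaps ht)⟩

theorem add (hM : IsMorseGauge M) (hN : IsMorseGauge N) : IsMorseGauge (M + N) :=
  ⟨hM.1.add hN.1, hM.2.1.add hN.2.1, fun t ht => add_nonneg (hM.2.2 t ht) (hN.2.2 t ht)⟩

theorem const {c : ℝ} (hc : 0 ≤ c) : IsMorseGauge fun _ => c :=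
  ⟨monotoneOn_const, continuousOn_const, fun _ _ => hc⟩

theorem sum {ι : Type*} (s : Finset ι) {F : ι → ℝ → ℝ} (hF : ∀ i, IsMorseGauge (F i)) :
    IsMorseGauge fun Q => ∑ i ∈ s, F i Q :=
  ⟨fun _ hQ _ hQ' h => Finset.sum_le_sum fun i _ => (hF i).1 hQ hQ' h,
    continuousOn_finsetSum _ fun i _ => (hF i).2.1,
    fun Q hQ => Finset.sum_nonneg fun i _ => (hF i).2.2 Q hQ⟩

theorem of_monotoneOn_continuous (hmono : MonotoneOn M (Ici 1)) (hcont : Continuous M)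
    (h₁ : 0 ≤ M 1) : IsMorseGauge M :=
  ⟨hmono, hcont.continuousOn, fun _ ht => h₁.trans (hmono self_mem_Ici ht ht)⟩

end IsMorseGauge

/-- A bound for the distance of the points of a `Q`-quasi-geodesic from its endpoints, when the
endpoints are at distance at most `T`. -/
def spread (T Q : ℝ) : ℝ := Q * (Q * (T + Q)) + Q

theorem isMorseGauge_spread {T : ℝ} (hT : 0 ≤ T) : IsMorseGauge (spread T) := by
  unfold spread
  refine .of_monotoneOn_continuous (fun Q hQ Q' _ hQQ' => ?_) (by fun_prop) (by positivity)
  have hQ0 : 0 ≤ Q := zero_le_one.trans hQ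
  have hQ'0 : 0 ≤ Q' := hQ0.trans hQQ'
  gcongr

/-- The gauge of the concatenation of an `M`-Morse and an `N`-Morse path. The factor `3` is the
loss in going straight to the common point from the nearest point of a quasi-geodesic. -/
def concatGauge (M N : ℝ → ℝ) (Q : ℝ) : ℝ := M (3 * Q) + N (3 * Q)

section ConcatGauge

variable {M N : ℝ → ℝ}

theorem isMorseGauge_concatGauge (hM : IsMorseGauge M) (hN : IsMorseGauge N) :
    IsMorseGauge (concatGauge M N) := by
  refine (hM.add hN).comp (φ := fun Q => 3 * Q) (fun Q _ Q' _ h => ?_) (by fun_prop)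
    fun Q hQ => ?_
  · beta_reduce
    gcongr
  · have : 1 ≤ Q := hQ
    exact mem_Ici.mpr (by linarith)

theorem left_le_concatGauge (hM : IsMorseGauge M) (hN : IsMorseGauge N) {Q : ℝ} (hQ : 1 ≤ Q) :
    M Q ≤ concatGauge M N Q := by
  have h3 : 1 ≤ 3 * Q := by linarith
  exact le_add_of_le_of_nonneg (hM.1 hQ h3 (by linarith)) (hN.2.2 _ h3)

theorem right_le_concatGauge (hM : IsMorseGauge M) (hN : IsMorseGauge N) {Q : ℝ} (hQ : 1 ≤ Q) :
    N Q ≤ concatGauge M N Q := by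
  have h3 : 1 ≤ 3 * Q := by linarith
  exact le_add_of_nonneg_of_le (hM.2.2 _ h3) (hN.1 hQ h3 (by linarith))

end ConcatGauge

section Space

variable {X : Type*} [MetricSpace X]

/-! ### Geodesics and quasi-geodesics -/

namespace GeodesicOn

variable {I J : Set ℝ} {γ : ℝ → X} {a b s t : ℝ}

theorem mono (h : GeodesicOn I γ) (hJ : J ⊆ I) : GeodesicOn J γ :=
  fun s hs t ht => h s (hJ hs) t (hJ ht)

theorem dist_of_le (h : GeodesicOn I γ) (hs : s ∈ I) (ht : t ∈ I) (hst : s ≤ t) :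
    dist (γ s) (γ t) = t - s := by
  rw [h s hs t ht, abs_of_nonneg (sub_nonneg.mpr hst)]

theorem dist_endpoints (h : GeodesicOn (Icc a b) γ) (hab : a ≤ b) : dist (γ a) (γ b) = b - a :=
  h.dist_of_le (left_mem_Icc.mpr hab) (right_mem_Icc.mpr hab) hab

theorem continuousOn (h : GeodesicOn I γ) : ContinuousOn γ I := by
  refine (LipschitzOnWith.of_dist_le_mul (K := 1) fun s hs t ht => ?_).continuousOn
  rw [h s hs t ht, NNReal.coe_one, one_mul, dist_comm, Real.dist_eq]

theorem isCompact_image (h : GeodesicOn I γ) (hab : Icc a b ⊆ I) : IsCompact (γ '' Icc a b) :=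
  isCompact_Icc.image_of_continuousOn (h.continuousOn.mono hab)

theorem comp_neg (h : GeodesicOn (Icc a b) γ) : GeodesicOn (Icc (-b) (-a)) fun u => γ (-u) :=
  fun s hs t ht => by
    rw [h _ (neg_mem_Icc_iff.mpr hs) _ (neg_mem_Icc_iff.mpr ht), neg_sub_neg, abs_sub_comm]

theorem smul {G : Type*} [Group G] [MulAction G X] [IsIsometricSMul G X] (h : GeodesicOn I γ)
    (g : G) : GeodesicOn I fun u => g • γ u :=
  fun s hs t ht => by rw [dist_smul, h s hs t ht]

theorem qGeoOn (h : GeodesicOn I γ) : QGeoOn 1 I γ := by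
  refine ⟨h.continuousOn, fun s hs t ht => ?_⟩
  rw [h s hs t ht]
  constructor <;> linarith

end GeodesicOn

theorem GeodesicSpace.exists_geodesicOn (hX : GeodesicSpace X) (x y : X) (b : ℝ) :
    ∃ η : ℝ → X, η b = x ∧ η (b + dist x y) = y ∧ GeodesicOn (Icc b (b + dist x y)) η := by
  obtain ⟨η, hx, hy, hη⟩ := hX x y
  refine ⟨fun u => η (u - b), by simpa using hx, by simpa using hy, fun s hs t ht => ?_⟩
  rw [hη _ ⟨by linarith [hs.1], by linarith [hs.2]⟩ _ ⟨by linarith [ht.1], by linarith [ht.2]⟩,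
    sub_sub_sub_cancel_right]

namespace QGeoOn

variable {Q Q' T a b c s t u : ℝ} {I J : Set ℝ} {γ f g : ℝ → X}

theorem mono (h : QGeoOn Q I γ) (hJ : J ⊆ I) : QGeoOn Q J γ :=
  ⟨h.1.mono hJ, fun s hs t ht => h.2 s (hJ hs) t (hJ ht)⟩

theorem mono_const (h : QGeoOn Q I γ) (hQ : 1 ≤ Q) (hQQ' : Q ≤ Q') : QGeoOn Q' I γ := by
  refine ⟨h.1, fun s hs t ht => ?_⟩
  obtain ⟨hlow, hup⟩ := h.2 s hs t ht
  have hdiv : |t - s| / Q' ≤ |t - s| / Q := by gcongr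
  have hmul : Q * |t - s| ≤ Q' * |t - s| := by gcongr
  constructor <;> linarith

theorem of_le (hcont : ContinuousOn γ I)
    (h : ∀ s ∈ I, ∀ t ∈ I, s ≤ t →
      (t - s) / Q - Q ≤ dist (γ s) (γ t) ∧ dist (γ s) (γ t) ≤ Q * (t - s) + Q) :
    QGeoOn Q I γ := by
  refine ⟨hcont, fun s hs t ht => ?_⟩
  rcases le_total s t with hst | hst
  · rw [abs_of_nonneg (sub_nonneg.mpr hst)]
    exact h s hs t ht hst
  · rw [abs_sub_comm, abs_of_nonneg (sub_nonneg.mpr hst), dist_comm]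
    exact h t ht s hs hst

theorem bounds (h : QGeoOn Q I γ) (hs : s ∈ I) (ht : t ∈ I) (hst : s ≤ t) :
    (t - s) / Q - Q ≤ dist (γ s) (γ t) ∧ dist (γ s) (γ t) ≤ Q * (t - s) + Q := by
  simpa only [abs_of_nonneg (sub_nonneg.mpr hst)] using h.2 s hs t ht

theorem sub_le (h : QGeoOn Q I γ) (hQ : 1 ≤ Q) (hs : s ∈ I) (ht : t ∈ I) (hst : s ≤ t) :
    t - s ≤ Q * (dist (γ s) (γ t) + Q) := by
  have hlow := (h.bounds hs ht hst).1
  rw [sub_le_iff_le_add, div_le_iff₀ (by linarith)] at hlow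
  linarith

theorem dist_le_spread (h : QGeoOn Q I γ) (hQ : 1 ≤ Q) (hs : s ∈ I) (hu : u ∈ I) (ht : t ∈ I)
    (hsu : s ≤ u) (hut : u ≤ t) (hT : dist (γ s) (γ t) ≤ T) :
    dist (γ u) (γ t) ≤ spread T Q := by
  have htime : t - u ≤ Q * (T + Q) :=
    calc t - u ≤ t - s := by linarith
      _ ≤ Q * (dist (γ s) (γ t) + Q) := h.sub_le hQ hs ht (hsu.trans hut)
      _ ≤ Q * (T + Q) := by gcongr
  calc dist (γ u) (γ t) ≤ Q * (t - u) + Q := (h.bounds hu ht hut).2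
    _ ≤ Q * (Q * (T + Q)) + Q := by gcongr

theorem comp_neg (h : QGeoOn Q (Icc a b) γ) : QGeoOn Q (Icc (-b) (-a)) fun u => γ (-u) := by
  refine ⟨h.1.comp (by fun_prop) fun u hu => neg_mem_Icc_iff.mpr hu, fun s hs t ht => ?_⟩
  have := h.2 (-s) (neg_mem_Icc_iff.mpr hs) (-t) (neg_mem_Icc_iff.mpr ht)
  rwa [neg_sub_neg, abs_sub_comm] at this

theorem smul {G : Type*} [Group G] [MulAction G X] [IsIsometricSMul G X] (h : QGeoOn Q I γ)
    (g : G) : QGeoOn Q I fun u => g • γ u :=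
  ⟨(isometry_smul X g).continuous.comp_continuousOn h.1, fun s hs t ht => by
    simpa only [dist_smul] using h.2 s hs t ht⟩

/-! ### Concatenating quasi-geodesics with geodesics -/

theorem piecewise (hf : QGeoOn Q (Icc a b) f) (hg : QGeoOn Q (Icc b c) g) (hfg : f b = g b)
    (hab : a ≤ b) (hbc : b ≤ c)
    (h : ∀ s ∈ Icc a b, ∀ t ∈ Icc b c,
      (t - s) / Q - Q ≤ dist (f s) (g t) ∧ dist (f s) (g t) ≤ Q * (t - s) + Q) :
    QGeoOn Q (Icc a c) ((Iic b).piecewise f g) := by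
  have hl : EqOn ((Iic b).piecewise f g) f (Iic b) := piecewise_eqOn _ f g
  have hr : EqOn ((Iic b).piecewise f g) g (Ici b) := fun u (hu : b ≤ u) => by
    rcases hu.eq_or_lt with rfl | hlt
    · rw [hl self_mem_Iic, hfg]
    · exact piecewise_eq_of_notMem _ f g hlt.not_ge
  refine of_le ?_ fun s hs t ht hst => ?_
  · rw [← Icc_union_Icc_eq_Icc hab hbc]
    exact (hf.1.congr (hl.mono Icc_subset_Iic_self)).union_of_isClosed
      (hg.1.congr (hr.mono Icc_subset_Ici_self)) isClosed_Icc isClosed_Icc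
  · rcases le_or_gt t b with htb | hbt
    · rw [hl (hst.trans htb), hl htb]
      exact hf.bounds ⟨hs.1, hst.trans htb⟩ ⟨ht.1, htb⟩ hst
    rw [hr hbt.le]
    rcases le_total s b with hsb | hbs
    · rw [hl hsb]
      exact h s ⟨hs.1, hsb⟩ t ⟨hbt.le, ht.2⟩
    · rw [hr hbs]
      exact hg.bounds ⟨hbs, hs.2⟩ ⟨hbt.le, ht.2⟩ hst

theorem exists_append (hX : GeodesicSpace X) (h : QGeoOn Q (Icc a b) γ) (hQ : 1 ≤ Q) (hab : a ≤ b)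
    {y : X}
    (hlow : ∀ s ∈ Icc a b, ∀ z, dist (γ b) z + dist z y = dist (γ b) y →
      (b - s + dist (γ b) z) / Q - Q ≤ dist (γ s) z) :
    ∃ (μ : ℝ → X) (c : ℝ), b ≤ c ∧ QGeoOn Q (Icc a c) μ ∧ μ c = y ∧ EqOn μ γ (Iic b) := by
  obtain ⟨η, hηb, hηy, hη⟩ := hX.exists_geodesicOn (γ b) y b
  have hbc : b ≤ b + dist (γ b) y := le_add_of_nonneg_right dist_nonneg
  refine ⟨(Iic b).piecewise γ η, _, hbc, h.piecewise (hη.qGeoOn.mono_const le_rfl hQ) hηb.symm hab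
    hbc fun s hs t ht => ?_, ?_, piecewise_eqOn _ _ _⟩
  · have hbt : dist (γ b) (η t) = t - b := by
      rw [← hηb, hη.dist_of_le (left_mem_Icc.mpr hbc) ht ht.1]
    have hty : dist (η t) y = b + dist (γ b) y - t := by
      rw [← hη.dist_of_le ht (right_mem_Icc.mpr hbc) ht.2, hηy]
    constructor
    · simpa [hbt, add_comm, add_sub_assoc] using hlow s hs (η t) (by linarith)
    · calc dist (γ s) (η t) ≤ dist (γ s) (γ b) + dist (γ b) (η t) := dist_triangle _ _ _
        _ ≤ (Q * (b - s) + Q) + Q * (t - b) := by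
          rw [hbt]
          exact add_le_add (h.bounds hs (right_mem_Icc.mpr hab) hs.2).2
            (le_mul_of_one_le_left (by linarith [ht.1]) hQ)
        _ = Q * (t - s) + Q := by ring
  · rcases hbc.eq_or_lt with heq | hlt
    · rw [← heq, piecewise_eq_of_mem _ _ _ self_mem_Iic, ← hηb, ← hηy, ← heq]
    · rw [piecewise_eq_of_notMem _ _ _ (notMem_Iic.mpr hlt), hηy]

theorem exists_append_short (hX : GeodesicSpace X) (h : QGeoOn Q (Icc a b) γ) (hQ : 1 ≤ Q)
    (hab : a ≤ b) {y : X} (hy : dist (γ b) y ≤ c) :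
    ∃ (μ : ℝ → X) (b' : ℝ), b ≤ b' ∧ QGeoOn (Q + 2 * c) (Icc a b') μ ∧ μ b' = y ∧
      EqOn μ γ (Iic b) := by
  have hc : 0 ≤ c := dist_nonneg.trans hy
  refine (h.mono_const hQ (by linarith : Q ≤ Q + 2 * c)).exists_append hX (by linarith) hab
    fun s hs z hz => ?_
  have hbs : 0 ≤ b - s := sub_nonneg.mpr hs.2
  have hzc : dist (γ b) z ≤ c := by linarith [dist_nonneg (x := z) (y := y)]
  have htri : dist (γ s) (γ b) ≤ dist (γ s) z + dist (γ b) z := dist_triangle_right _ _ _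
  have hdiv : (b - s) / (Q + 2 * c) ≤ (b - s) / Q := by gcongr; linarith
  have hdiv' : dist (γ b) z / (Q + 2 * c) ≤ dist (γ b) z := div_le_self dist_nonneg (by linarith)
  rw [add_div]
  linarith [(h.bounds hs (right_mem_Icc.mpr hab) hs.2).1]

theorem exists_extend_short (hX : GeodesicSpace X) (h : QGeoOn Q (Icc a b) γ) (hQ : 1 ≤ Q)
    (hab : a ≤ b) {x y : X} (hx : dist (γ a) x ≤ c) (hy : dist (γ b) y ≤ c) :
    ∃ (μ : ℝ → X) (a' b' : ℝ), a' ≤ a ∧ b ≤ b' ∧ QGeoOn (Q + 4 * c) (Icc a' b') μ ∧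
      μ a' = x ∧ μ b' = y ∧ EqOn μ γ (Icc a b) := by
  have hc : 0 ≤ c := dist_nonneg.trans hx
  obtain ⟨μ, b', hbb', hμ, hμb', hμγ⟩ := h.exists_append_short hX hQ hab hy
  obtain ⟨ν, a', haa', hν, hνa', hνμ⟩ := hμ.comp_neg.exists_append_short hX (by linarith)
    (neg_le_neg (hab.trans hbb')) (y := x) (c := c) (by rwa [neg_neg, hμγ hab])
  refine ⟨fun u => ν (-u), -a', b', by linarith, hbb', ?_, by simpa only [neg_neg] using hνa', ?_,
    fun u hu => ?_⟩
  · convert hν.comp_neg using 1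
    · ring
    · rw [neg_neg]
  · simpa only [neg_neg, hμb'] using hνμ (neg_le_neg (hab.trans hbb'))
  · simpa only [neg_neg, hμγ (mem_Iic.mpr hu.2)] using hνμ (neg_le_neg hu.1 : -u ≤ -a)

theorem exists_append_nearest (hX : GeodesicSpace X) (h : QGeoOn Q (Icc a b) γ) (hQ : 1 ≤ Q)
    (hab : a ≤ b) {x : X} (hx : ∀ s ∈ Icc a b, dist (γ b) x ≤ dist (γ s) x) :
    ∃ (μ : ℝ → X) (c : ℝ), b ≤ c ∧ QGeoOn (3 * Q) (Icc a c) μ ∧ μ c = x ∧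
      EqOn μ γ (Iic b) := by
  refine (h.mono_const hQ (by linarith : Q ≤ 3 * Q)).exists_append hX (by linarith) hab
    fun s hs z hz => ?_
  have hlow := (h.bounds hs (right_mem_Icc.mpr hab) hs.2).1
  have htri : dist (γ s) (γ b) ≤ dist (γ s) z + dist (γ b) z := dist_triangle_right _ _ _
  have hnear : dist (γ b) z ≤ dist (γ s) z := by linarith [hx s hs, dist_triangle (γ s) z x]
  have hdiv : dist (γ b) z / Q ≤ dist (γ b) z := div_le_self dist_nonneg hQ
  have hthird : (b - s + dist (γ b) z) / (3 * Q) = ((b - s) / Q + dist (γ b) z / Q) / 3 := by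
    rw [← add_div, div_div, mul_comm]
  linarith

theorem exists_split_nearest (hX : GeodesicSpace X) (h : QGeoOn Q (Icc a b) γ) (hQ : 1 ≤ Q)
    (hab : a ≤ b) (x : X) :
    ∃ m ∈ Icc a b,
      (∃ (μ : ℝ → X) (c : ℝ), m ≤ c ∧ QGeoOn (3 * Q) (Icc a c) μ ∧ μ c = x ∧
        EqOn μ γ (Iic m)) ∧
      (∃ (μ : ℝ → X) (c : ℝ), c ≤ m ∧ QGeoOn (3 * Q) (Icc c b) μ ∧ μ c = x ∧
        EqOn μ γ (Ici m)) := by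
  obtain ⟨m, hm, hmin'⟩ := isCompact_Icc.exists_isMinOn (nonempty_Icc.mpr hab)
    ((continuous_id.dist (continuous_const (y := x))).comp_continuousOn h.1)
  have hmin : ∀ u ∈ Icc a b, dist (γ m) x ≤ dist (γ u) x := fun u hu => hmin' hu
  refine ⟨m, hm, (h.mono (Icc_subset_Icc_right hm.2)).exists_append_nearest hX hQ hm.1
    fun s hs => hmin s ⟨hs.1, hs.2.trans hm.2⟩, ?_⟩
  obtain ⟨μ, c, hmc, hμ, hμc, hμγ⟩ :=
    (h.mono (Icc_subset_Icc_left hm.1)).comp_neg.exists_append_nearest hX hQ (neg_le_neg hm.2)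
      (x := x) fun s hs => by
        rw [neg_neg]
        exact hmin _ (Icc_subset_Icc_left hm.1 (neg_mem_Icc_iff.mpr hs))
  refine ⟨fun u => μ (-u), -c, by linarith, by simpa only [neg_neg] using hμ.comp_neg,
    by simpa only [neg_neg] using hμc, fun u hu => ?_⟩
  simpa only [neg_neg] using hμγ (neg_le_neg hu : -u ≤ -m)

end QGeoOn

/-! ### Morse paths -/

theorem morseOn_empty (M : ℝ → ℝ) (γ : ℝ → X) : MorseOn M ∅ γ :=
  fun _ _ _ hs => hs.elim

namespace MorseOn

variable {M N : ℝ → ℝ} {I J : Set ℝ} {γ : ℝ → X} {a b c T : ℝ}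

theorem mono (h : MorseOn M I γ) (hJ : J ⊆ I) : MorseOn M J γ :=
  fun Q hQ s hs t ht => h Q hQ s (hJ hs) t (hJ ht)

theorem mono_gauge (h : MorseOn M I γ) (hMN : ∀ Q, 1 ≤ Q → M Q ≤ N Q) : MorseOn N I γ :=
  fun Q hQ s hs t ht hst lam a b hab hlam ha hb u hu => by
    obtain ⟨v, hv, hd⟩ := h Q hQ s hs t ht hst lam a b hab hlam ha hb u hu
    exact ⟨v, hv, hd.trans (hMN Q hQ)⟩

theorem comp_neg (h : MorseOn M (Icc a b) γ) : MorseOn M (Icc (-b) (-a)) fun u => γ (-u) := by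
  intro Q hQ s hs t ht hst lam a' b' hab hlam ha hb u hu
  obtain ⟨v, hv, hd⟩ := h Q hQ (-t) (neg_mem_Icc_iff.mpr ht) (-s) (neg_mem_Icc_iff.mpr hs)
    (neg_le_neg hst) (fun u => lam (-u)) (-b') (-a') (neg_le_neg hab) hlam.comp_neg
    (by simpa using hb) (by simpa using ha) (-u) (by simpa [and_comm] using hu)
  exact ⟨-v, ⟨le_neg.mp hv.2, neg_le.mp hv.1⟩, by simpa using hd⟩

theorem comp_neg_iff : MorseOn M (Icc (-b) (-a)) (fun u => γ (-u)) ↔ MorseOn M (Icc a b) γ :=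
  ⟨fun h => by simpa only [neg_neg] using h.comp_neg, comp_neg⟩

theorem smul {G : Type*} [Group G] [MulAction G X] [IsIsometricSMul G X] (h : MorseOn M I γ)
    (g : G) : MorseOn M I fun u => g • γ u :=
  fun Q hQ s hs t ht hst lam a b hab hlam ha hb u hu => by
    obtain ⟨v, hv, hd⟩ := h Q hQ s hs t ht hst (fun u => g⁻¹ • lam u) a b hab (hlam.smul g⁻¹)
      (by simp [ha]) (by simp [hb]) u hu
    exact ⟨v, hv, by rwa [← dist_smul g⁻¹, inv_smul_smul]⟩

theorem of_length_le (h : GeodesicOn (Icc a b) γ) (hT : b - a ≤ T) :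
    MorseOn (spread T) (Icc a b) γ := by
  intro Q hQ s hs t ht hst lam a' b' hab hlam ha hb u hu
  refine ⟨t, right_mem_Icc.mpr hst, ?_⟩
  rw [← hb]
  refine hlam.dist_le_spread hQ (left_mem_Icc.mpr hab) hu (right_mem_Icc.mpr hab) hu.1 hu.2 ?_
  rw [ha, hb, h.dist_of_le hs ht hst]
  linarith [hs.1, ht.2]

end MorseOn

theorem GeodesicOn.lt_length_of_not_morseOn {M : ℝ → ℝ} {γ : ℝ → X} {a b T : ℝ}
    (hγ : GeodesicOn (Icc a b) γ) (hM : ∀ Q, 1 ≤ Q → spread T Q ≤ M Q)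
    (h : ¬ MorseOn M (Icc a b) γ) : T < b - a := by
  contrapose! h
  exact (MorseOn.of_length_le hγ h).mono_gauge hM

/-- A quasi-geodesic side of a triangle whose other two sides are Morse is close to these: cut it
at the point nearest to the opposite vertex. -/
theorem QGeoOn.thin_triangle (hX : GeodesicSpace X) {M N : ℝ → ℝ} {lam γ₁ γ₂ : ℝ → X}
    {Q a b s₁ t₁ s₂ t₂ : ℝ} (hlam : QGeoOn Q (Icc a b) lam) (hQ : 1 ≤ Q)
    (h₁ : MorseOn M (Icc s₁ t₁) γ₁) (h₂ : MorseOn N (Icc s₂ t₂) γ₂) (hst₁ : s₁ ≤ t₁)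
    (hst₂ : s₂ ≤ t₂) (ha : lam a = γ₁ s₁) (hγ : γ₁ t₁ = γ₂ s₂) (hb : lam b = γ₂ t₂) {u : ℝ}
    (hu : u ∈ Icc a b) :
    (∃ v ∈ Icc s₁ t₁, dist (lam u) (γ₁ v) ≤ M (3 * Q)) ∨
      ∃ v ∈ Icc s₂ t₂, dist (lam u) (γ₂ v) ≤ N (3 * Q) := by
  have h3 : 1 ≤ 3 * Q := by linarith
  obtain ⟨m, hm, ⟨μ, c, hmc, hμ, hμc, hμl⟩, ⟨ν, d, hdm, hν, hνd, hνl⟩⟩ :=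
    hlam.exists_split_nearest hX hQ (hu.1.trans hu.2) (γ₁ t₁)
  rcases le_total u m with hum | hmu
  · left
    rw [← hμl hum]
    exact h₁ _ h3 s₁ (left_mem_Icc.mpr hst₁) t₁ (right_mem_Icc.mpr hst₁) hst₁ μ a c
      (hm.1.trans hmc) hμ (by rw [hμl hm.1, ha]) hμc u ⟨hu.1, hum.trans hmc⟩
  · right
    rw [← hνl hmu]
    exact h₂ _ h3 s₂ (left_mem_Icc.mpr hst₂) t₂ (right_mem_Icc.mpr hst₂) hst₂ ν d b
      (hdm.trans hm.2) hν (hνd.trans hγ) (by rw [hνl hm.2, hb]) u ⟨hdm.trans hmu, hu.2⟩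

theorem MorseOn.concat (hX : GeodesicSpace X) {M N : ℝ → ℝ} (hM : IsMorseGauge M)
    (hN : IsMorseGauge N) {γ : ℝ → X} {a m b : ℝ} (h₁ : MorseOn M (Icc a m) γ)
    (h₂ : MorseOn N (Icc m b) γ) : MorseOn (concatGauge M N) (Icc a b) γ := by
  intro Q hQ s hs t ht hst lam a' b' hab hlam ha hb u hu
  rcases le_total t m with htm | hmt
  · exact (h₁.mono_gauge fun _ => left_le_concatGauge hM hN) Q hQ s ⟨hs.1, hst.trans htm⟩ t
      ⟨ht.1, htm⟩ hst lam a' b' hab hlam ha hb u hu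
  rcases le_total m s with hms | hsm
  · exact (h₂.mono_gauge fun _ => right_le_concatGauge hM hN) Q hQ s ⟨hms, hs.2⟩ t
      ⟨hmt, ht.2⟩ hst lam a' b' hab hlam ha hb u hu
  have h3 : 1 ≤ 3 * Q := by linarith
  rcases hlam.thin_triangle hX hQ (h₁.mono (Icc_subset_Icc_left hs.1))
    (h₂.mono (Icc_subset_Icc_right ht.2)) hsm hmt ha rfl hb hu with ⟨v, hv, hd⟩ | ⟨v, hv, hd⟩
  · exact ⟨v, ⟨hv.1, hv.2.trans hmt⟩, hd.trans (le_add_of_nonneg_right (hN.2.2 _ h3))⟩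
  · exact ⟨v, ⟨hsm.trans hv.1, hv.2⟩, hd.trans (le_add_of_nonneg_left (hM.2.2 _ h3))⟩

theorem gromovHyperbolic_of_forall_morseOn (hX : GeodesicSpace X) {N : ℝ → ℝ}
    (hN : IsMorseGauge N)
    (h : ∀ (γ : ℝ → X) (a b : ℝ), GeodesicOn (Icc a b) γ → MorseOn N (Icc a b) γ) :
    GromovHyperbolic X := by
  refine ⟨N (3 * 1), hN.2.2 _ (by norm_num), ?_⟩
  intro γ₁ γ₂ γ₃ a₁ b₁ a₂ b₂ a₃ b₃ _ h₂ h₃ hγ₁ hγ₂ hγ₃ e₁₂ e₂₃ e₃₁ s hs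
  rcases hγ₁.qGeoOn.thin_triangle hX le_rfl (h _ _ _ hγ₃.comp_neg) (h _ _ _ hγ₂.comp_neg)
    (neg_le_neg h₃) (neg_le_neg h₂) (by rw [neg_neg, e₃₁]) (by rw [neg_neg, neg_neg, e₂₃])
    (by rw [neg_neg, e₁₂]) hs with ⟨v, hv, hd⟩ | ⟨v, hv, hd⟩
  · exact ⟨γ₃ (-v), Or.inr (mem_image_of_mem γ₃ ⟨le_neg.mp hv.2, neg_le.mp hv.1⟩), hd⟩
  · exact ⟨γ₂ (-v), Or.inl (mem_image_of_mem γ₂ ⟨le_neg.mp hv.2, neg_le.mp hv.1⟩), hd⟩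

/-! ### Geodesics with nearby endpoints -/

theorem MorseOn.of_dist_le (hX : GeodesicSpace X) {M : ℝ → ℝ} {I J : Set ℝ} {α β : ℝ → X}
    (hβ : MorseOn M J β) (hI : I.OrdConnected) {φ : ℝ → ℝ} (hφ : MonotoneOn φ I)
    (hφc : ContinuousOn φ I) (hφJ : MapsTo φ I J) {c : ℝ}
    (hαβ : ∀ u ∈ I, dist (α u) (β (φ u)) ≤ c) : MorseOn (fun Q => M (Q + 4 * c) + c) I α := by
  intro Q hQ s hs t ht hst lam a b hab hlam ha hb u hu
  have hc : 0 ≤ c := dist_nonneg.trans (hαβ s hs)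
  obtain ⟨μ, a', b', haa', hbb', hμ, hμa, hμb, hμlam⟩ := hlam.exists_extend_short hX hQ hab
    (x := β (φ s)) (y := β (φ t)) (c := c) (ha ▸ hαβ s hs) (hb ▸ hαβ t ht)
  obtain ⟨v, hv, hd⟩ := hβ (Q + 4 * c) (by linarith) _ (hφJ hs) _ (hφJ ht) (hφ hs ht hst) μ a' b'
    (haa'.trans (hab.trans hbb')) hμ hμa hμb u ⟨haa'.trans hu.1, hu.2.trans hbb'⟩
  obtain ⟨w, hw, rfl⟩ := intermediate_value_Icc hst (hφc.mono (hI.out hs ht)) hv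
  rw [hμlam hu] at hd
  refine ⟨w, hw, (dist_triangle_right _ _ (β (φ w))).trans ?_⟩
  exact add_le_add hd (hαβ w (hI.out hs ht hw))

/-- The distance between an `M`-Morse geodesic and a geodesic with `E`-close endpoints, both
parametrized by arc length. -/
def closeDist (M : ℝ → ℝ) (E : ℝ) : ℝ := 2 * M (1 + 4 * E) + E

/-- The gauge inherited by geodesics with endpoints `E`-close to those of an `M`-Morse one. -/
def closeGauge (M : ℝ → ℝ) (E Q : ℝ) : ℝ := M (Q + 4 * closeDist M E) + closeDist M E

theorem isMorseGauge_closeGauge {M : ℝ → ℝ} (hM : IsMorseGauge M) {E : ℝ} (hE : 0 ≤ E) :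
    IsMorseGauge (closeGauge M E) := by
  have hc : 0 ≤ closeDist M E :=
    add_nonneg (mul_nonneg zero_le_two (hM.2.2 _ (by linarith))) hE
  refine (hM.comp (φ := fun Q => Q + 4 * closeDist M E) (fun _ _ _ _ h => add_le_add_left h _)
    (by fun_prop) fun Q hQ => ?_).add (.const hc)
  exact mem_Ici.mpr (le_add_of_le_of_nonneg (mem_Ici.mp hQ) (by positivity))

section EndpointsClose

variable {M : ℝ → ℝ} {α β : ℝ → X} {a b p q E : ℝ}

theorem MorseOn.dist_le_closeDist (hX : GeodesicSpace X) (hβM : MorseOn M (Icc p q) β)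
    (hβ : GeodesicOn (Icc p q) β) (hα : GeodesicOn (Icc a b) α) (hpq : p ≤ q)
    (hl : dist (α a) (β p) ≤ E) (hr : dist (α b) (β q) ≤ E) {u : ℝ} (hu : u ∈ Icc a b) :
    dist (α u) (β (min (p + (u - a)) q)) ≤ closeDist M E := by
  have hab : a ≤ b := hu.1.trans hu.2
  have hE : 0 ≤ E := dist_nonneg.trans hl
  obtain ⟨μ, a', b', haa', hbb', hμ, hμa, hμb, hμα⟩ :=
    hα.qGeoOn.exists_extend_short hX le_rfl hab hl hr
  obtain ⟨v, hv, hd⟩ := hβM (1 + 4 * E) (by linarith) p (left_mem_Icc.mpr hpq) q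
    (right_mem_Icc.mpr hpq) hpq μ a' b' (haa'.trans (hab.trans hbb')) hμ hμa hμb u
    ⟨haa'.trans hu.1, hu.2.trans hbb'⟩
  rw [hμα hu] at hd
  have hαu := hα.dist_of_le (left_mem_Icc.mpr hab) hu hu.1
  have hβv := hβ.dist_of_le (left_mem_Icc.mpr hpq) hv hv.1
  have hpara : |min (p + (u - a)) q - v| ≤ E + M (1 + 4 * E) := by
    have hle := dist_triangle4_right (α a) (α u) (β p) (β v)
    have hge := dist_triangle4 (β p) (α a) (α u) (β v)
    rw [dist_comm (β p) (α a)] at hge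
    rw [abs_le]
    rcases le_total (p + (u - a)) q with h | h
    · rw [min_eq_left h]
      constructor <;> linarith
    · rw [min_eq_right h]
      constructor <;> linarith [hv.2]
  have hβ' := hβ v hv (min (p + (u - a)) q) ⟨le_min (by linarith [hu.1]) hpq, min_le_right _ _⟩
  have htri := dist_triangle (α u) (β v) (β (min (p + (u - a)) q))
  unfold closeDist
  linarith

theorem MorseOn.of_endpoints_close (hX : GeodesicSpace X) (hβM : MorseOn M (Icc p q) β)
    (hβ : GeodesicOn (Icc p q) β) (hα : GeodesicOn (Icc a b) α) (hpq : p ≤ q)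
    (hl : dist (α a) (β p) ≤ E) (hr : dist (α b) (β q) ≤ E) :
    MorseOn (closeGauge M E) (Icc a b) α :=
  hβM.of_dist_le hX ordConnected_Icc (φ := fun u => min (p + (u - a)) q)
    (fun _ _ _ _ h => by dsimp only; gcongr) (by fun_prop)
    (fun u hu => ⟨le_min (by linarith [hu.1]) hpq, min_le_right _ _⟩)
    fun _ hu => hβM.dist_le_closeDist hX hβ hα hpq hl hr hu

end EndpointsClose

/-! ### Contracting sets -/

theorem exists_last_crossing {f : ℝ → ℝ} {a b R : ℝ} (hab : a ≤ b) (hf : ContinuousOn f (Icc a b))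
    (ha : f a ≤ R) (hb : R < f b) :
    ∃ v ∈ Icc a b, f v ≤ R ∧ ∀ w ∈ Icc v b, R ≤ f w := by
  have hcomp : IsCompact (Icc a b ∩ f ⁻¹' Iic R) :=
    isCompact_Icc.of_isClosed_subset (hf.preimage_isClosed_of_isClosed isClosed_Icc isClosed_Iic)
      inter_subset_left
  obtain ⟨v, ⟨hv, hvR⟩, hmax⟩ := hcomp.exists_isGreatest ⟨a, left_mem_Icc.mpr hab, ha⟩
  obtain ⟨v', hv', hv'R⟩ := intermediate_value_Icc hv.2 (hf.mono (Icc_subset_Icc_left hv.1))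
    ⟨hvR, hb.le⟩
  obtain rfl : v' = v := le_antisymm (hmax ⟨⟨hv.1.trans hv'.1, hv'.2⟩, hv'R.le⟩) hv'.1
  refine ⟨v', hv, hvR, fun w hw => ?_⟩
  by_contra! hlt
  obtain rfl : w = v' := le_antisymm (hmax ⟨⟨hv.1.trans hw.1, hw.2⟩, hlt.le⟩) hw.1
  exact hlt.ne hv'R

theorem exists_first_crossing {f : ℝ → ℝ} {a b R : ℝ} (hab : a ≤ b)
    (hf : ContinuousOn f (Icc a b)) (ha : R < f a) (hb : f b ≤ R) :
    ∃ v ∈ Icc a b, f v ≤ R ∧ ∀ w ∈ Icc a v, R ≤ f w := by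
  obtain ⟨v, hv, hvR, h⟩ := exists_last_crossing (f := fun u => f (-u)) (neg_le_neg hab)
    (hf.comp (by fun_prop) fun u hu => neg_mem_Icc_iff.mpr hu)
    (by simpa using hb) (by simpa using ha)
  refine ⟨-v, neg_mem_Icc_iff.mpr hv, hvR, fun w hw => ?_⟩
  simpa using h (-w) ⟨le_neg.mp hw.2, neg_le_neg hw.1⟩

theorem exists_mem_projSet {A : Set X} (hA : IsCompact A) (hne : A.Nonempty) (x : X) :
    ∃ p ∈ projSet A x, dist x p = Metric.infDist x A := by
  obtain ⟨p, hp, h⟩ := hA.exists_infDist_eq_dist hne x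
  exact ⟨p, ⟨hp, fun z hz => h ▸ Metric.infDist_le_dist_of_mem hz⟩, h.symm⟩

/-- The radius outside of which the projection of a `Q`-quasi-geodesic to a `C`-contracting set
progresses at most half as fast as the quasi-geodesic has to. -/
def farRadius (C Q : ℝ) : ℝ := Q * (2 * Q * C + 1) + 2 * Q

/-- A bound on the time that a `Q`-quasi-geodesic can spend outside of the
`farRadius C Q`-neighbourhood of a `C`-contracting set. -/
def excursionTime (C Q : ℝ) : ℝ := 2 * Q * (2 * farRadius C Q + Q) + 4 * C * Q

/-- A bound on the distance from a `C`-contracting set of a `Q`-quasi-geodesic with endpoints on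
it. -/
def excursion (C Q : ℝ) : ℝ := farRadius C Q + (Q * excursionTime C Q + Q)

/-- The Morse gauge of `C`-contracting geodesics. -/
def contractingGauge (C Q : ℝ) : ℝ := excursion C Q + spread (2 * excursion C Q) Q

theorem isMorseGauge_contractingGauge {C : ℝ} (hC : 0 ≤ C) :
    IsMorseGauge (contractingGauge C) := by
  unfold contractingGauge spread excursion excursionTime farRadius
  refine .of_monotoneOn_continuous (fun Q hQ Q' _ hQQ' => ?_) (by fun_prop) (by positivity)
  have hQ0 : 0 ≤ Q := zero_le_one.trans hQ
  have hQ'0 : 0 ≤ Q' := hQ0.trans hQQ'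
  gcongr

namespace ContractingSet

variable {A : Set X} {C Q R τ a b : ℝ} {lam : ℝ → X}

theorem dist_proj_le_of_dist_lt (h : ContractingSet C A) {x y p q : X}
    (hxy : dist x y < Metric.infDist x A) (hp : p ∈ projSet A x) (hq : q ∈ projSet A y) :
    dist p q ≤ C :=
  h x x (Metric.mem_ball_self (dist_nonneg.trans_lt hxy)) y (Metric.mem_ball'.mpr hxy) p hp q hq

theorem dist_proj_le_of_steps (h : ContractingSet C A) (hA : IsCompact A) (hne : A.Nonempty)
    (hτ : 0 ≤ τ) (hfar : ∀ u ∈ Icc a b, R ≤ Metric.infDist (lam u) A)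
    (hstep : ∀ s ∈ Icc a b, ∀ t ∈ Icc a b, s ≤ t → t - s ≤ τ → dist (lam s) (lam t) < R)
    {p : X} (hp : p ∈ projSet A (lam a)) (n : ℕ) :
    ∀ t ∈ Icc a b, t - a ≤ n * τ → ∀ q ∈ projSet A (lam t), dist p q ≤ C * (n + 1) := by
  induction n with
  | zero =>
    intro t ht hta q hq
    obtain rfl : a = t := le_antisymm ht.1 (by simpa using hta)
    simpa using h.dist_proj_le_of_dist_lt
      ((hstep a ht a ht le_rfl (by simpa using hτ)).trans_le (hfar a ht)) hp hq
  | succ n ih =>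
    intro t ht hta q hq
    set t' := max a (t - τ)
    have ht't : t' ≤ t := max_le ht.1 (by linarith)
    have ht' : t' ∈ Icc a b := ⟨le_max_left _ _, ht't.trans ht.2⟩
    obtain ⟨q', hq', -⟩ := exists_mem_projSet hA hne (lam t')
    have hpq' : dist p q' ≤ C * (n + 1) := by
      refine ih t' ht' ?_ q' hq'
      push_cast at hta
      rw [sub_le_iff_le_add]
      exact max_le (by linarith [mul_nonneg n.cast_nonneg hτ]) (by linarith)
    have hq'q : dist q' q ≤ C := h.dist_proj_le_of_dist_lt
      ((hstep t' ht' t ht ht't (by linarith [le_max_right a (t - τ)])).trans_le (hfar t' ht'))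
      hq' hq
    calc dist p q ≤ dist p q' + dist q' q := dist_triangle _ _ _
      _ ≤ C * (n + 1) + C := add_le_add hpq' hq'q
      _ = C * ((n + 1 : ℕ) + 1) := by push_cast; ring

theorem mul_dist_proj_le_of_far (h : ContractingSet C A) (hC : 0 ≤ C) (hA : IsCompact A)
    (hne : A.Nonempty) (hlam : QGeoOn Q (Icc a b) lam) (hQ : 1 ≤ Q) (hab : a ≤ b)
    (hfar : ∀ u ∈ Icc a b, farRadius C Q ≤ Metric.infDist (lam u) A) {p q : X}
    (hp : p ∈ projSet A (lam a)) (hq : q ∈ projSet A (lam b)) :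
    Q * dist p q ≤ (b - a) / 2 + 2 * C * Q := by
  set τ := 2 * Q * C + 1 with hτ
  have hτ0 : 0 < τ := by positivity
  have hstep : ∀ s ∈ Icc a b, ∀ t ∈ Icc a b, s ≤ t → t - s ≤ τ →
      dist (lam s) (lam t) < farRadius C Q := fun s hs t ht hst hts =>
    calc dist (lam s) (lam t) ≤ Q * (t - s) + Q := (hlam.bounds hs ht hst).2
      _ ≤ Q * τ + Q := by gcongr
      _ < farRadius C Q := by unfold farRadius; linarith
  have hba : 0 ≤ (b - a) / τ := div_nonneg (sub_nonneg.mpr hab) hτ0.le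
  have hsteps : dist p q ≤ C * (⌈(b - a) / τ⌉₊ + 1) :=
    h.dist_proj_le_of_steps hA hne hτ0.le hfar hstep hp _ b (right_mem_Icc.mpr hab)
      ((div_le_iff₀ hτ0).mp (Nat.le_ceil _)) q hq
  have hspeed : Q * C * ((b - a) / τ) ≤ (b - a) / 2 := by
    rw [← mul_div_assoc, div_le_iff₀ hτ0, hτ]
    linarith
  calc Q * dist p q ≤ Q * (C * ((b - a) / τ + 1 + 1)) := by
        grw [hsteps, (Nat.ceil_lt_add_one hba).le]
    _ = Q * C * ((b - a) / τ) + 2 * C * Q := by ring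
    _ ≤ (b - a) / 2 + 2 * C * Q := by gcongr

theorem sub_le_excursionTime (h : ContractingSet C A) (hC : 0 ≤ C) (hA : IsCompact A)
    (hne : A.Nonempty) (hlam : QGeoOn Q (Icc a b) lam) (hQ : 1 ≤ Q) (hab : a ≤ b)
    (hfar : ∀ u ∈ Icc a b, farRadius C Q ≤ Metric.infDist (lam u) A)
    (ha : Metric.infDist (lam a) A ≤ farRadius C Q)
    (hb : Metric.infDist (lam b) A ≤ farRadius C Q) : b - a ≤ excursionTime C Q := by
  obtain ⟨p, hp, hpd⟩ := exists_mem_projSet hA hne (lam a)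
  obtain ⟨q, hq, hqd⟩ := exists_mem_projSet hA hne (lam b)
  have hproj := h.mul_dist_proj_le_of_far hC hA hne hlam hQ hab hfar hp hq
  have hdist : dist (lam a) (lam b) ≤ 2 * farRadius C Q + dist p q := by
    have := dist_triangle4_right (lam a) (lam b) p q
    linarith
  have htime : b - a ≤ Q * (2 * farRadius C Q + dist p q + Q) :=
    calc b - a ≤ Q * (dist (lam a) (lam b) + Q) :=
          hlam.sub_le hQ (left_mem_Icc.mpr hab) (right_mem_Icc.mpr hab) hab
      _ ≤ Q * (2 * farRadius C Q + dist p q + Q) := by gcongr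
  unfold excursionTime
  linarith

theorem infDist_le_excursion (h : ContractingSet C A) (hC : 0 ≤ C) (hA : IsCompact A)
    (hlam : QGeoOn Q (Icc a b) lam) (hQ : 1 ≤ Q) (ha : lam a ∈ A) (hb : lam b ∈ A) {u : ℝ}
    (hu : u ∈ Icc a b) : Metric.infDist (lam u) A ≤ excursion C Q := by
  have hne : A.Nonempty := ⟨_, ha⟩
  have hR : 0 ≤ farRadius C Q := by unfold farRadius; positivity
  rcases le_or_gt (Metric.infDist (lam u) A) (farRadius C Q) with hle | hgt
  · refine hle.trans (le_add_of_nonneg_right ?_)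
    unfold excursionTime
    positivity
  have hcont : ContinuousOn (fun u => Metric.infDist (lam u) A) (Icc a b) :=
    (Metric.continuous_infDist_pt A).comp_continuousOn hlam.1
  obtain ⟨v, hv, hvR, hvfar⟩ := exists_last_crossing hu.1
    (hcont.mono (Icc_subset_Icc_right hu.2)) (by rwa [Metric.infDist_zero_of_mem ha]) hgt
  obtain ⟨w, hw, hwR, hwfar⟩ := exists_first_crossing hu.2
    (hcont.mono (Icc_subset_Icc_left hu.1)) hgt (by rwa [Metric.infDist_zero_of_mem hb])
  have htime : w - v ≤ excursionTime C Q :=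
    h.sub_le_excursionTime hC hA hne (hlam.mono (Icc_subset_Icc hv.1 hw.2)) hQ (hv.2.trans hw.1)
      (fun x hx => (le_total x u).elim (fun hxu => hvfar x ⟨hx.1, hxu⟩)
        fun hux => hwfar x ⟨hux, hx.2⟩) hvR hwR
  calc Metric.infDist (lam u) A ≤ Metric.infDist (lam v) A + dist (lam v) (lam u) :=
        dist_comm (lam u) _ ▸ Metric.infDist_le_infDist_add_dist
    _ ≤ farRadius C Q + (Q * (u - v) + Q) :=
        add_le_add hvR (hlam.bounds ⟨hv.1, hv.2.trans hu.2⟩ hu hv.2).2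
    _ ≤ excursion C Q := by
        unfold excursion
        gcongr
        linarith [hw.1]

end ContractingSet

/-! ### Contracting geodesics are Morse -/

section Overshoot

variable {γ lam : ℝ → X} {p q s t a b u v D Q : ℝ}

theorem isClosed_setOf_exists_dist_le {A : Set X} (hA : IsCompact A)
    (hD : 0 ≤ D) : IsClosed {x | ∃ y ∈ A, dist x y ≤ D} := by
  convert Metric.isClosed_cthickening (δ := D) (E := A)
  ext x
  simp [hA.cthickening_eq_biUnion_closedBall hD]

theorem GeodesicOn.exists_dist_le_of_isPreconnected (hγ : GeodesicOn (Icc p q) γ)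
    (ht : t ∈ Icc p q) {S : Set X} (hS : IsPreconnected S)
    (hSγ : ∀ x ∈ S, ∃ v ∈ Icc p q, dist x (γ v) ≤ D)
    (hl : ∃ x ∈ S, ∃ v ∈ Icc p t, dist x (γ v) ≤ D)
    (hr : ∃ x ∈ S, ∃ v ∈ Icc t q, dist x (γ v) ≤ D) : ∃ x ∈ S, dist x (γ t) ≤ 2 * D := by
  have hD : 0 ≤ D := by
    obtain ⟨x, -, v, -, hd⟩ := hl
    exact dist_nonneg.trans hd
  obtain ⟨x, hxS, ⟨_, ⟨v, hv, rfl⟩, hxv⟩, ⟨_, ⟨w, hw, rfl⟩, hxw⟩⟩ :=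
    isPreconnected_closed_iff.mp hS _ _
      (isClosed_setOf_exists_dist_le (hγ.isCompact_image (Icc_subset_Icc_right ht.2)) hD)
      (isClosed_setOf_exists_dist_le (hγ.isCompact_image (Icc_subset_Icc_left ht.1)) hD)
      (fun x hx => by
        obtain ⟨v, hv, hd⟩ := hSγ x hx
        exact (le_total v t).imp (fun hvt => ⟨_, mem_image_of_mem γ ⟨hv.1, hvt⟩, hd⟩)
          fun htv => ⟨_, mem_image_of_mem γ ⟨htv, hv.2⟩, hd⟩)
      (by simpa [Set.Nonempty] using hl) (by simpa [Set.Nonempty] using hr)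
  refine ⟨x, hxS, ?_⟩
  have hvI : v ∈ Icc p q := ⟨hv.1, hv.2.trans ht.2⟩
  have hwI : w ∈ Icc p q := ⟨ht.1.trans hw.1, hw.2⟩
  have hvw : w - v ≤ 2 * D := by
    rw [← hγ.dist_of_le hvI hwI (hv.2.trans hw.1)]
    linarith [dist_triangle_left (γ v) (γ w) x]
  have hvt := hγ.dist_of_le hvI ht hv.2
  have htw := hγ.dist_of_le ht hwI hw.1
  have htri₁ := dist_triangle x (γ v) (γ t)
  have htri₂ := dist_triangle_right x (γ t) (γ w)
  linarith

theorem GeodesicOn.dist_le_of_overshoot (hγ : GeodesicOn (Icc p q) γ)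
    (hlam : QGeoOn Q (Icc a b) lam) (hQ : 1 ≤ Q) (hs : s ∈ Icc p q) (ht : t ∈ Icc p q)
    (hst : s ≤ t) (ha : lam a = γ s) (hb : lam b = γ t)
    (hnear : ∀ u ∈ Icc a b, ∃ v ∈ Icc p q, dist (lam u) (γ v) ≤ D) (hu : u ∈ Icc a b)
    (hv : v ∈ Icc t q) (huv : dist (lam u) (γ v) ≤ D) :
    dist (lam u) (γ t) ≤ spread (2 * D) Q := by
  have hD : 0 ≤ D := dist_nonneg.trans huv
  have hau : Icc a u ⊆ Icc a b := Icc_subset_Icc_right hu.2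
  obtain ⟨_, ⟨w, hw, rfl⟩, hwt⟩ : ∃ x ∈ lam '' Icc a u, dist x (γ t) ≤ 2 * D := by
    refine hγ.exists_dist_le_of_isPreconnected ht
      (isPreconnected_Icc.image lam (hlam.1.mono hau)) ?_
      ⟨lam a, mem_image_of_mem lam (left_mem_Icc.mpr hu.1), s, ⟨hs.1, hst⟩, by simpa [ha]⟩
      ⟨lam u, mem_image_of_mem lam (right_mem_Icc.mpr hu.1), v, hv, huv⟩
    rintro _ ⟨w, hw, rfl⟩
    exact hnear w (hau hw)
  rw [← hb] at hwt ⊢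
  exact hlam.dist_le_spread hQ (hau hw) hu (right_mem_Icc.mpr (hu.1.trans hu.2)) hw.2 hu.2 hwt

end Overshoot

theorem ContractingSet.morseOn {C p q : ℝ} {γ : ℝ → X} (h : ContractingSet C (γ '' Icc p q))
    (hC : 0 ≤ C) (hγ : GeodesicOn (Icc p q) γ) : MorseOn (contractingGauge C) (Icc p q) γ := by
  intro Q hQ s hs t ht hst lam a b _ hlam ha hb u hu
  have hA : IsCompact (γ '' Icc p q) := hγ.isCompact_image le_rfl
  have hnear : ∀ u ∈ Icc a b, ∃ v ∈ Icc p q, dist (lam u) (γ v) ≤ excursion C Q := fun u hu => by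
    obtain ⟨_, ⟨⟨v, hv, rfl⟩, -⟩, hd⟩ := exists_mem_projSet hA ⟨_, mem_image_of_mem γ hs⟩ (lam u)
    exact ⟨v, hv, hd.le.trans (h.infDist_le_excursion hC hA hlam hQ
      (ha ▸ mem_image_of_mem γ hs) (hb ▸ mem_image_of_mem γ ht) hu)⟩
  obtain ⟨v, hv, hd⟩ := hnear u hu
  have hE : 0 ≤ excursion C Q := dist_nonneg.trans hd
  have hspread : spread (2 * excursion C Q) Q ≤ contractingGauge C Q := le_add_of_nonneg_left hE
  rcases le_total t v with htv | hvt
  · exact ⟨t, right_mem_Icc.mpr hst, (hγ.dist_le_of_overshoot hlam hQ hs ht hst ha hb hnear hu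
      ⟨htv, hv.2⟩ hd).trans hspread⟩
  rcases le_total v s with hvs | hsv
  · have := hγ.comp_neg.dist_le_of_overshoot (s := -t) (t := -s) (u := -u) (v := -v) hlam.comp_neg
      hQ (neg_mem_Icc_iff.mpr (by simpa using ht)) (neg_mem_Icc_iff.mpr (by simpa using hs))
      (neg_le_neg hst) (by simpa using hb) (by simpa using ha)
      (fun x hx => by
        obtain ⟨y, hy, hd⟩ := hnear (-x) (neg_mem_Icc_iff.mpr hx)
        exact ⟨-y, neg_mem_Icc_iff.mpr (by simpa using hy), by simpa using hd⟩)
      (neg_mem_Icc_iff.mpr (by simpa using hu)) ⟨neg_le_neg hvs, neg_le_neg hv.1⟩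
      (by simpa using hd)
    simp only [neg_neg] at this
    exact ⟨s, left_mem_Icc.mpr hst, this.trans hspread⟩
  · exact ⟨v, ⟨hsv, hvt⟩, hd.trans (le_add_of_nonneg_right (by unfold spread; positivity))⟩

/-! ### Geodesics that fellow travel a contracting segment -/

/-- A bound on the distance at which a geodesic with endpoints `D`-close to those of a geodesic
`β` passes the terminal point of a `C`-contracting initial segment of `β`. -/
def fellowConst (C D : ℝ) : ℝ := 2 * (farRadius C 1 + D) + 6 * C + 1 + 2 * D

/-- The gauge of the ends of a geodesic that fellow travels one with `C`-contracting ends. -/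
def fellowGauge (C D : ℝ) : ℝ → ℝ := closeGauge (contractingGauge C) (fellowConst C D)

theorem farRadius_one (C : ℝ) : farRadius C 1 = 2 * C + 3 := by
  unfold farRadius
  ring

theorem le_fellowConst {C D : ℝ} (hC : 0 ≤ C) (hD : 0 ≤ D) : D ≤ fellowConst C D := by
  unfold fellowConst
  linarith [farRadius_one C]

theorem isMorseGauge_fellowGauge {C D : ℝ} (hC : 0 ≤ C) (hD : 0 ≤ D) :
    IsMorseGauge (fellowGauge C D) :=
  isMorseGauge_closeGauge (isMorseGauge_contractingGauge hC) (hD.trans (le_fellowConst hC hD))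

section Fellow

variable {C D a b p q r : ℝ} {α β : ℝ → X}

theorem GeodesicOn.dist_le_of_mem_projSet (hβ : GeodesicOn (Icc p q) β) (hr : r ∈ Icc p q) {x y : X}
    (hx : dist x (β q) ≤ D) (hy : y ∈ projSet (β '' Icc p r) x) : dist y (β r) ≤ 2 * D := by
  obtain ⟨⟨v, hv, rfl⟩, hmin⟩ := hy
  have hq : q ∈ Icc p q := right_mem_Icc.mpr (hr.1.trans hr.2)
  have hvI : v ∈ Icc p q := ⟨hv.1, hv.2.trans hr.2⟩
  have hnear := hmin (β r) (mem_image_of_mem β (right_mem_Icc.mpr hr.1))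
  have hvr := hβ.dist_of_le hvI hr hv.2
  have hrq := hβ.dist_of_le hr hq hr.2
  have hvq := hβ.dist_of_le hvI hq hvI.2
  have htri₁ := dist_triangle_right x (β r) (β q)
  have htri₂ := dist_triangle_left (β v) (β q) x
  linarith

/-- Run along the geodesic until it enters the ball around its endpoint whose projection is
bounded, which leaves a part that is too short for the projection to move far. -/
theorem ContractingSet.dist_proj_le_of_geodesicOn {A : Set X} {R u : ℝ} (h : ContractingSet C A)
    (hC : 0 ≤ C) (hA : IsCompact A) (hne : A.Nonempty) (hα : GeodesicOn (Icc u b) α) (hub : u ≤ b)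
    (hR : farRadius C 1 ≤ R) (hfar : ∀ x ∈ Icc u b, R ≤ Metric.infDist (α x) A)
    (hu : Metric.infDist (α u) A ≤ R) {y z : X} (hy : y ∈ projSet A (α u))
    (hyd : dist (α u) y = Metric.infDist (α u) A) (hz : z ∈ projSet A (α b))
    (hzd : dist (α b) z = Metric.infDist (α b) A) : dist y z ≤ R + 6 * C + 1 := by
  have hbI : b ∈ Icc u b := right_mem_Icc.mpr hub
  have h1R : 1 ≤ R := by linarith [farRadius_one C]
  set w := max u (b - Metric.infDist (α b) A + 1)
  have hwI : w ∈ Icc u b := ⟨le_max_left _ _, max_le hub (by linarith [hfar b hbI])⟩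
  obtain ⟨y', hy', -⟩ := exists_mem_projSet hA hne (α w)
  have hy'z : dist y' z ≤ C := by
    rw [dist_comm]
    refine h.dist_proj_le_of_dist_lt ?_ hz hy'
    rw [dist_comm, hα.dist_of_le hwI hbI hwI.2]
    linarith [le_max_right u (b - Metric.infDist (α b) A + 1)]
  have hyy' : 1 * dist y y' ≤ (w - u) / 2 + 2 * C * 1 :=
    h.mul_dist_proj_le_of_far hC hA hne (hα.mono (Icc_subset_Icc_right hwI.2)).qGeoOn le_rfl hwI.1
      (fun x hx => hR.trans (hfar x (Icc_subset_Icc_right hwI.2 hx))) hy hy'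
  have hlen : b - u ≤ R + dist y z + Metric.infDist (α b) A := by
    rw [← hα.dist_endpoints hub, ← hzd]
    linarith [dist_triangle4_right (α u) (α b) y z]
  have hwu : w ≤ u + (R + dist y z + 1) :=
    max_le (by linarith [dist_nonneg (x := y) (y := z)]) (by linarith)
  linarith [dist_triangle y y' z]

theorem ContractingSet.exists_dist_le_fellowConst (h : ContractingSet C (β '' Icc p r)) (hC : 0 ≤ C)
    (hα : GeodesicOn (Icc a b) α) (hab : a ≤ b) (hβ : GeodesicOn (Icc p q) β) (hr : r ∈ Icc p q)
    (hl : dist (α a) (β p) ≤ D) (hrt : dist (α b) (β q) ≤ D) :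
    ∃ u ∈ Icc a b, dist (α u) (β r) ≤ fellowConst C D := by
  set A := β '' Icc p r
  set R := farRadius C 1 + D
  have hconst : fellowConst C D = 2 * R + 6 * C + 1 + 2 * D := rfl
  have hD : 0 ≤ D := dist_nonneg.trans hl
  have hfarD : D ≤ R := by linarith [farRadius_one C]
  have hA : IsCompact A := hβ.isCompact_image (Icc_subset_Icc_right hr.2)
  have hne : A.Nonempty := (nonempty_Icc.mpr hr.1).image β
  obtain ⟨z, hz, hzd⟩ := exists_mem_projSet hA hne (α b)
  have hzr : dist z (β r) ≤ 2 * D := hβ.dist_le_of_mem_projSet hr hrt hz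
  rcases le_or_gt (Metric.infDist (α b) A) R with hle | hgt
  · refine ⟨b, right_mem_Icc.mpr hab, ?_⟩
    linarith [dist_triangle (α b) z (β r)]
  have ha : Metric.infDist (α a) A ≤ R := ((Metric.infDist_le_dist_of_mem
    (mem_image_of_mem β (left_mem_Icc.mpr hr.1))).trans hl).trans hfarD
  obtain ⟨u, hu, huR, hfar⟩ := exists_last_crossing hab
    ((Metric.continuous_infDist_pt A).comp_continuousOn hα.continuousOn) ha hgt
  obtain ⟨y, hy, hyd⟩ := exists_mem_projSet hA hne (α u)
  have hyz : dist y z ≤ R + 6 * C + 1 :=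
    h.dist_proj_le_of_geodesicOn hC hA hne (hα.mono (Icc_subset_Icc_left hu.1)) hu.2
      (le_add_of_nonneg_right hD) hfar huR hy hyd hz hzd
  have huy : dist (α u) y ≤ R := hyd.trans_le huR
  exact ⟨u, hu, by linarith [dist_triangle4 (α u) y z (β r)]⟩

theorem ContractingSet.morseOn_fellow_left (hX : GeodesicSpace X)
    (h : ContractingSet C (β '' Icc p r)) (hC : 0 ≤ C)
    (hα : GeodesicOn (Icc a b) α) (hab : a ≤ b) (hβ : GeodesicOn (Icc p q) β) (hr : r ∈ Icc p q)
    (hl : dist (α a) (β p) ≤ D) (hrt : dist (α b) (β q) ≤ D) {K : ℝ}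
    (hK : K + D + fellowConst C D ≤ r - p) :
    MorseOn (fellowGauge C D) (Icc a (a + K)) α := by
  have hDc : D ≤ fellowConst C D := le_fellowConst hC (dist_nonneg.trans hl)
  obtain ⟨u, hu, hd⟩ := h.exists_dist_le_fellowConst hC hα hab hβ hr hl hrt
  have hβr : GeodesicOn (Icc p r) β := hβ.mono (Icc_subset_Icc_right hr.2)
  have hau : MorseOn (fellowGauge C D) (Icc a u) α :=
    (h.morseOn hC hβr).of_endpoints_close hX hβr (hα.mono (Icc_subset_Icc_right hu.2)) hr.1
      (hl.trans hDc) hd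
  refine hau.mono (Icc_subset_Icc_right ?_)
  have hlα : dist (α a) (α u) = u - a := hα.dist_of_le (left_mem_Icc.mpr hab) hu hu.1
  have hlβ : dist (β p) (β r) = r - p := hβr.dist_endpoints hr.1
  have htri := dist_triangle4 (β p) (α a) (α u) (β r)
  rw [dist_comm (β p) (α a)] at htri
  linarith

theorem ContractingSet.morseOn_fellow_right (hX : GeodesicSpace X)
    (h : ContractingSet C (β '' Icc r q)) (hC : 0 ≤ C)
    (hα : GeodesicOn (Icc a b) α) (hab : a ≤ b) (hβ : GeodesicOn (Icc p q) β) (hr : r ∈ Icc p q)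
    (hl : dist (α a) (β p) ≤ D) (hrt : dist (α b) (β q) ≤ D) {K : ℝ}
    (hK : K + D + fellowConst C D ≤ q - r) :
    MorseOn (fellowGauge C D) (Icc (b - K) b) α := by
  have himage : (fun u => β (-u)) '' Icc (-q) (-r) = β '' Icc r q := by
    rw [← image_image β Neg.neg, image_neg_Icc, neg_neg, neg_neg]
  rw [← MorseOn.comp_neg_iff, neg_sub, sub_eq_neg_add]
  exact ContractingSet.morseOn_fellow_left (r := -r) hX (by rwa [himage]) hC hα.comp_neg
    (neg_le_neg hab) hβ.comp_neg (by simpa [and_comm] using hr) (by simpa using hrt)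
    (by simpa using hl) (by linarith)

end Fellow

/-! ### Local-to-global for geodesics -/

/-- The local-to-global property for geodesics at scale `L`: geodesics whose subsegments of length
at most `L` are `M`-Morse are `M'`-Morse. -/
def GeodesicLTGWith (X : Type*) [MetricSpace X] (L : ℝ) (M M' : ℝ → ℝ) : Prop :=
  ∀ (I : Set ℝ) (γ : ℝ → X), I.OrdConnected → GeodesicOn I γ →
    (∀ s ∈ I, ∀ t ∈ I, s ≤ t → t - s ≤ L → MorseOn M (Icc s t) γ) → MorseOn M' I γ

/-- The Morse local-to-global property restricted to geodesics: locally Morse geodesics are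
Morse. -/
def GeodesicLTG (X : Type*) [MetricSpace X] : Prop :=
  ∀ M, IsMorseGauge M → ∃ L M', IsMorseGauge M' ∧ GeodesicLTGWith X L M M'

theorem MLTG.geodesicLTG (h : MLTG X) : GeodesicLTG X := by
  intro M hM
  obtain ⟨L, _, M', -, -, hM', hloc⟩ := h 1 le_rfl M hM
  exact ⟨L, M', hM', fun I γ hI hγ hγM => (hloc I hI γ fun s hs t ht hst hL =>
    ⟨(hγ.mono (hI.out hs ht)).qGeoOn, hγM s hs t ht hst hL⟩).2⟩

/-- The gauge of a path consisting of an `M`-Morse path, a geodesic of length at most `1` and an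
`N`-Morse path. -/
def bridgeGauge (M N : ℝ → ℝ) : ℝ → ℝ := concatGauge M (concatGauge (spread 1) N)

theorem isMorseGauge_bridgeGauge {M N : ℝ → ℝ} (hM : IsMorseGauge M) (hN : IsMorseGauge N) :
    IsMorseGauge (bridgeGauge M N) :=
  isMorseGauge_concatGauge hM
    (isMorseGauge_concatGauge (isMorseGauge_spread zero_le_one) hN)

theorem exists_mem_exists_notMem_of_mem_upperBounds {S : Set ℝ} (hS : S.Nonempty) {b : ℝ}
    (hb : b ∈ upperBounds S) (hbS : b ∉ S) {ε : ℝ} (hε : 0 < ε) :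
    ∃ s ∈ S, ∃ k ∉ S, s ≤ k ∧ k ≤ b ∧ k - s ≤ ε := by
  obtain ⟨s, hs, hlt⟩ := exists_lt_of_lt_csSup hS (sub_lt_self (sSup S) hε)
  refine ⟨s, hs, min (s + ε) b, fun hk => ?_, le_min (by linarith) (hb hs), min_le_right _ _,
    by linarith [min_le_left (s + ε) b]⟩
  rcases min_choice (s + ε) b with h | h
  · rw [h] at hk
    linarith [le_csSup ⟨b, hb⟩ hk]
  · exact hbS (h ▸ hk)

section Cut

variable {M M' N : ℝ → ℝ} {L a b : ℝ} {α : ℝ → X}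

/-- Cut at a time `k` up to which the remaining geodesic `α` on `[k, b]` fails to be `N`-Morse: if
it always began with an `M`-Morse segment, then `α` would be `M'`-Morse up to that time. -/
theorem GeodesicOn.exists_cut_left (hα : GeodesicOn (Icc a b) α) (hX : GeodesicSpace X)
    (hltg : GeodesicLTGWith X L M M') (hM' : IsMorseGauge M') (hN : IsMorseGauge N)
    (hnot : ¬ MorseOn (bridgeGauge M' N) (Icc a b) α) :
    ∃ k ∈ Icc a b, ¬ MorseOn N (Icc k b) α ∧ ¬ MorseOn M (Icc k (k + L)) α := by
  have hN₁ := isMorseGauge_concatGauge (isMorseGauge_spread zero_le_one) hN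
  have hab : a ≤ b := by
    by_contra hba
    exact hnot (Icc_eq_empty hba ▸ morseOn_empty _ _)
  by_contra! hM
  set S := {k ∈ Icc a b | ¬ MorseOn N (Icc k b) α}
  have hdown : ∀ s ∈ S, ∀ k ∈ Icc a s, k ∈ S := fun s hs k hk =>
    ⟨⟨hk.1, hk.2.trans hs.1.2⟩, fun h => hs.2 (h.mono (Icc_subset_Icc_left hk.2))⟩
  have hS : ∀ s ∈ S, MorseOn M' (Icc a s) α := fun s hs =>
    hltg _ _ ordConnected_Icc (hα.mono (Icc_subset_Icc_right hs.1.2)) fun u hu t _ _ htL =>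
      (hM u (hdown s hs u hu).1 (hdown s hs u hu).2).mono (Icc_subset_Icc_right (by linarith))
  have ha : a ∈ S := ⟨left_mem_Icc.mpr hab, fun h => hnot <| h.mono_gauge fun Q hQ =>
    (right_le_concatGauge (isMorseGauge_spread zero_le_one) hN hQ).trans
      (right_le_concatGauge hM' hN₁ hQ)⟩
  have hb : b ∉ S := fun h => hnot ((hS b h).mono_gauge fun _ => left_le_concatGauge hM' hN₁)
  obtain ⟨s, hs, k, hk, hsk, hkb, hle⟩ :=
    exists_mem_exists_notMem_of_mem_upperBounds ⟨a, ha⟩ (fun s hs => hs.1.2) hb one_pos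
  have hkN : MorseOn N (Icc k b) α := by
    by_contra h
    exact hk ⟨⟨hs.1.1.trans hsk, hkb⟩, h⟩
  exact hnot <| (hS s hs).concat hX hM' hN₁ <|
    (MorseOn.of_length_le (hα.mono (Icc_subset_Icc hs.1.1 hkb)) hle).concat hX
      (isMorseGauge_spread zero_le_one) hN hkN

theorem GeodesicOn.exists_cut_right (hα : GeodesicOn (Icc a b) α) (hX : GeodesicSpace X)
    (hltg : GeodesicLTGWith X L M M') (hM' : IsMorseGauge M') (hN : IsMorseGauge N)
    (hnot : ¬ MorseOn (bridgeGauge M' N) (Icc a b) α) :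
    ∃ k ∈ Icc a b, ¬ MorseOn N (Icc a k) α ∧ ¬ MorseOn M (Icc (k - L) k) α := by
  rw [← MorseOn.comp_neg_iff] at hnot
  obtain ⟨k, hk, hkN, hkM⟩ := hα.comp_neg.exists_cut_left hX hltg hM' hN hnot
  refine ⟨-k, by simpa [and_comm] using neg_mem_Icc_iff.mpr hk, ?_, ?_⟩
  · rwa [← MorseOn.comp_neg_iff, neg_neg]
  · rwa [← MorseOn.comp_neg_iff, neg_sub, neg_neg, sub_neg_eq_add, add_comm L]

theorem exists_geodesicOn_not_morseOn_ends (hX : GeodesicSpace X) (hnh : ¬ GromovHyperbolic X)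
    (hltg : GeodesicLTGWith X L M M') (hM' : IsMorseGauge M') (hN : IsMorseGauge N) :
    ∃ (α : ℝ → X) (a b : ℝ), a ≤ b ∧ GeodesicOn (Icc a b) α ∧ ¬ MorseOn N (Icc a b) α ∧
      ¬ MorseOn M (Icc a (a + L)) α ∧ ¬ MorseOn M (Icc (b - L) b) α := by
  have hN₁ := isMorseGauge_bridgeGauge hM' hN
  obtain ⟨α, a, b, hα, hnot⟩ : ∃ (α : ℝ → X) (a b : ℝ), GeodesicOn (Icc a b) α ∧
      ¬ MorseOn (bridgeGauge M' (bridgeGauge M' N)) (Icc a b) α := by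
    by_contra! h
    exact hnh (gromovHyperbolic_of_forall_morseOn hX (isMorseGauge_bridgeGauge hM' hN₁) h)
  obtain ⟨k, hk, hkN, hkM⟩ := hα.exists_cut_left hX hltg hM' hN₁ hnot
  have hαk : GeodesicOn (Icc k b) α := hα.mono (Icc_subset_Icc_left hk.1)
  obtain ⟨l, hl, hlN, hlM⟩ := hαk.exists_cut_right hX hltg hM' hN hkN
  exact ⟨α, k, l, hl.1, hαk.mono (Icc_subset_Icc_right hl.2), hlN, hkM, hlM⟩

end Cut

/-- Move the endpoints of a geodesic without Morse ends into `O`: a contracting end of the new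
geodesic would make the corresponding end of the old one Morse. -/
theorem exists_geodesicOn_not_contractingSet_ends (hX : GeodesicSpace X)
    (hnh : ¬ GromovHyperbolic X) (hltg : GeodesicLTG X) {D : ℝ} (hD : 0 ≤ D) {O : Set X}
    (hO : ∀ x, ∃ y ∈ O, dist x y ≤ D) {C : ℝ} (hC : 0 ≤ C) (K₀ : ℝ) :
    ∃ K, K₀ ≤ K ∧ ∀ N, IsMorseGauge N → ∃ (β : ℝ → X) (S : ℝ), 0 ≤ S ∧ K ≤ S ∧
      GeodesicOn (Icc 0 S) β ∧ ¬ MorseOn N (Icc 0 S) β ∧ ¬ ContractingSet C (β '' Icc 0 K) ∧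
      ¬ ContractingSet C (β '' Icc (S - K) S) ∧ β 0 ∈ O ∧ β S ∈ O := by
  obtain ⟨L, M', hM', hloc⟩ := hltg _ (isMorseGauge_fellowGauge hC hD)
  set K := max (max 0 K₀) (L + D + fellowConst C D)
  have hK : 0 ≤ K := (le_max_left _ _).trans (le_max_left _ _)
  have hKL : L + D + fellowConst C D ≤ K := le_max_right _ _
  refine ⟨K, (le_max_right _ _).trans (le_max_left _ _), fun N hN => ?_⟩
  have hN₁ := isMorseGauge_closeGauge hN hD
  have hspread : IsMorseGauge (spread (K + 2 * D)) := isMorseGauge_spread (by positivity)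
  obtain ⟨α, a, b, hab, hα, hαN, hleft, hright⟩ :=
    exists_geodesicOn_not_morseOn_ends hX hnh hloc hM' (hN₁.add hspread)
  have hlen : K + 2 * D < b - a := hα.lt_length_of_not_morseOn
    (fun Q hQ => le_add_of_nonneg_left (hN₁.2.2 Q hQ)) hαN
  obtain ⟨x, hxO, hx⟩ := hO (α a)
  obtain ⟨y, hyO, hy⟩ := hO (α b)
  obtain ⟨β, rfl, hβy, hβ⟩ := hX x y
  have hKS : K ≤ dist (β 0) y := by
    linarith [dist_triangle4_right (α a) (α b) (β 0) y, hα.dist_endpoints hab]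
  generalize dist (β 0) y = S at hβy hβ hKS
  subst hβy
  have hS : 0 ≤ S := hK.trans hKS
  refine ⟨β, S, hS, hKS, hβ, fun h => hαN ?_, fun h => hleft ?_, fun h => hright ?_, hxO, hyO⟩
  · exact (h.of_endpoints_close hX hβ hα hS hx hy).mono_gauge fun Q hQ =>
      le_add_of_nonneg_right (hspread.2.2 Q hQ)
  · exact h.morseOn_fellow_left hX hC hα hab hβ ⟨hK, hKS⟩ hx hy (by linarith)
  · exact h.morseOn_fellow_right hX hC hα hab hβ ⟨by linarith, by linarith⟩ hx hy (by linarith)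

/-! ### Strong exhaustions -/

/-- Add up the gauges of those classes `P i` that consist of uniformly Morse rays. -/
theorem exists_isStrongExhaustion_of_countable {ι : Type*} [Countable ι] (x₀ : X)
    (P : ι → (ℝ → X) → Prop)
    (hP : ∀ M, IsMorseGauge M → ∃ i,
      (∀ γ, GeodesicRayFrom x₀ γ → MorseOn M (Ici 0) γ → P i γ) ∧
      ∃ N, IsMorseGauge N ∧ ∀ γ, GeodesicRayFrom x₀ γ → P i γ → MorseOn N (Ici 0) γ) :
    ∃ Ms : ℕ → ℝ → ℝ, IsStrongExhaustion x₀ Ms := by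
  let κ := {i // ∃ N, IsMorseGauge N ∧ ∀ γ, GeodesicRayFrom x₀ γ → P i γ → MorseOn N (Ici 0) γ}
  choose N hN hNM using fun i : κ => i.2
  obtain ⟨i₀, -, hi₀⟩ := hP _ (.const le_rfl)
  have : Nonempty κ := ⟨⟨i₀, hi₀⟩⟩
  obtain ⟨e, he⟩ := exists_surjective_nat κ
  let Ms : ℕ → ℝ → ℝ := fun n Q => ∑ i ∈ Finset.range (n + 1), N (e i) Q
  have huniform : ∀ M, IsMorseGauge M → ∃ n, ∀ γ, GeodesicRayFrom x₀ γ →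
      MorseOn M (Ici 0) γ → MorseOn (Ms n) (Ici 0) γ := by
    intro M hM
    obtain ⟨i, hMi, hi⟩ := hP M hM
    obtain ⟨n, hn⟩ := he ⟨i, hi⟩
    refine ⟨n, fun γ hγ hγM => ?_⟩
    have hγN : MorseOn (N (e n)) (Ici 0) γ := hNM (e n) γ hγ (by rw [hn]; exact hMi γ hγ hγM)
    exact hγN.mono_gauge fun Q hQ => Finset.single_le_sum (f := fun i => N (e i) Q)
      (fun i _ => (hN (e i)).2.2 Q hQ) (Finset.self_mem_range_succ n)
  refine ⟨Ms, fun n => .sum _ fun i => hN (e i), fun n Q hQ => ?_, ?_, huniform⟩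
  · simp only [Ms, Finset.sum_range_succ _ (n + 1)]
    exact le_add_of_nonneg_right ((hN _).2.2 Q hQ)
  · rintro γ hγ ⟨M, hM, hγM⟩
    obtain ⟨n, hn⟩ := huniform M hM
    exact ⟨n, hn γ hγ hγM⟩

/-! ### Geometric actions -/

section Action

variable {G : Type*} [Group G] [MulAction G X]

namespace IsGeometricAction

theorem exists_cobounded (hG : IsGeometricAction G X) (x₀ : X) :
    ∃ D : ℝ, 0 ≤ D ∧ ∀ x : X, ∃ g : G, dist x (g • x₀) ≤ D := by
  obtain ⟨_, -, K, hK, hcov⟩ := hG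
  obtain ⟨D, hD⟩ := hK.isBounded.subset_closedBall x₀
  refine ⟨max D 0, le_max_right _ _, fun x => ?_⟩
  obtain ⟨g, k, hk, rfl⟩ := hcov x
  exact ⟨g, by rw [dist_smul]; exact (hD hk).trans (le_max_left _ _)⟩

theorem finite_dist_le [ProperSpace X] (hG : IsGeometricAction G X) (x₀ : X) (r : ℝ) :
    {g : G | dist (g • x₀) x₀ ≤ r}.Finite := by
  obtain ⟨-, _, -⟩ := hG
  exact (ProperlyDiscontinuousSMul.finite_disjoint_inter_image (isCompact_singleton (x := x₀))
    (isCompact_closedBall x₀ r)).subset fun g hg => ⟨g • x₀, ⟨x₀, rfl, rfl⟩, hg⟩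

theorem countable [ProperSpace X] (hG : IsGeometricAction G X) (x₀ : X) : Countable G := by
  rw [← countable_univ_iff]
  refine (countable_iUnion fun n : ℕ => (hG.finite_dist_le x₀ n).countable).mono fun g _ => ?_
  exact mem_iUnion.mpr (exists_nat_ge (dist (g • x₀) x₀))

end IsGeometricAction

/-- The group elements moving `x₀` roughly along an `M`-Morse geodesic of length `L`, up to an
error of `D` at either end. -/
def morseSteps (G : Type*) [Group G] [MulAction G X] (x₀ : X) (D : ℝ) (M : ℝ → ℝ) (L : ℝ) :
    Set G :=
  {w | ∃ (σ : ℝ → X) (c : ℝ), GeodesicOn (Icc c (c + L)) σ ∧ MorseOn M (Icc c (c + L)) σ ∧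
    dist (σ c) x₀ ≤ D ∧ dist (σ (c + L)) (w • x₀) ≤ D}

/-- The ray `γ` on `[0, ∞)` is approximated by the orbit of `x₀`, with error `D`, in such a way
that all steps over time intervals of length `L` are in `F`. -/
def HasSteps (x₀ : X) (D L : ℝ) (F : Set G) (γ : ℝ → X) : Prop :=
  ∀ s, 0 ≤ s → ∃ g : G, ∃ w ∈ F,
    dist (γ s) (g • x₀) ≤ D ∧ dist (γ (s + L)) ((g * w) • x₀) ≤ D

variable {x₀ : X} {D L : ℝ} {M : ℝ → ℝ} {γ : ℝ → X}

theorem finite_morseSteps [ProperSpace X] (hG : IsGeometricAction G X) (hL : 0 ≤ L) :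
    (morseSteps G x₀ D M L).Finite := by
  refine (hG.finite_dist_le x₀ (2 * D + L)).subset ?_
  rintro w ⟨σ, c, hσ, -, hl, hr⟩
  have hlen := hσ.dist_endpoints (le_add_of_nonneg_right hL)
  have htri := dist_triangle4_right x₀ (w • x₀) (σ c) (σ (c + L))
  rw [mem_ofPred, dist_comm]
  rw [dist_comm] at hl hr
  linarith

theorem MorseOn.hasSteps_morseSteps [IsIsometricSMul G X]
    (hcob : ∀ x : X, ∃ g : G, dist x (g • x₀) ≤ D) (hγ : GeodesicOn (Ici 0) γ)
    (hM : MorseOn M (Ici 0) γ) : HasSteps x₀ D L (morseSteps G x₀ D M L) γ := by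
  intro s hs
  obtain ⟨g, hg⟩ := hcob (γ s)
  obtain ⟨h, hh⟩ := hcob (γ (s + L))
  have hsub : Icc s (s + L) ⊆ Ici 0 := fun u hu => hs.trans hu.1
  refine ⟨g, g⁻¹ * h, ⟨fun u => g⁻¹ • γ u, s, (hγ.mono hsub).smul g⁻¹, (hM.mono hsub).smul g⁻¹,
    ?_, ?_⟩, hg, by rwa [mul_inv_cancel_left]⟩
  · rwa [← dist_smul g, smul_inv_smul]
  · rwa [← dist_smul g, smul_inv_smul, smul_smul, mul_inv_cancel_left]

theorem HasSteps.morseOn_Icc [IsIsometricSMul G X] (h : HasSteps x₀ D L (morseSteps G x₀ D M L) γ)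
    (hX : GeodesicSpace X) (hL : 0 ≤ L) (hγ : GeodesicOn (Ici 0) γ) {s : ℝ} (hs : 0 ≤ s) :
    MorseOn (closeGauge M (2 * D)) (Icc s (s + L)) γ := by
  obtain ⟨g, w, ⟨σ, c, hσ, hσM, hl, hr⟩, hgl, hgr⟩ := h s hs
  refine (hσM.smul g).of_endpoints_close hX (hσ.smul g)
    (hγ.mono fun u hu => mem_Ici.mpr (hs.trans hu.1)) (le_add_of_nonneg_right hL) ?_ ?_
  · have htri := dist_triangle_right (γ s) (g • σ c) (g • x₀)
    rw [dist_smul] at htri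
    linarith
  · have htri := dist_triangle_right (γ (s + L)) (g • σ (c + L)) ((g * w) • x₀)
    rw [mul_smul, dist_smul, ← mul_smul] at htri
    linarith

theorem HasSteps.morseOn_Ici [IsIsometricSMul G X] (h : HasSteps x₀ D L (morseSteps G x₀ D M L) γ)
    (hX : GeodesicSpace X) (hL : 0 ≤ L) (hγ : GeodesicOn (Ici 0) γ) {M' : ℝ → ℝ} {l : ℝ}
    (hloc : GeodesicLTGWith X l (closeGauge M (2 * D)) M') (hlL : l ≤ L) :
    MorseOn M' (Ici 0) γ :=
  hloc _ _ ordConnected_Ici hγ fun _ hs _ _ _ hstl =>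
    (h.morseOn_Icc hX hL hγ hs).mono (Icc_subset_Icc_right (by linarith))

theorem exists_isStrongExhaustion [ProperSpace X] (hX : GeodesicSpace X)
    (hG : IsGeometricAction G X) (hltg : GeodesicLTG X) (x₀ : X) :
    ∃ Ms : ℕ → ℝ → ℝ, IsStrongExhaustion x₀ Ms := by
  obtain ⟨D, hD, hcob⟩ := hG.exists_cobounded x₀
  have := hG.countable x₀
  have := hG.1
  refine exists_isStrongExhaustion_of_countable x₀
    (fun i : ℕ × Finset G => HasSteps x₀ D i.1 (i.2 : Set G)) fun M hM => ?_
  obtain ⟨l, M', hM', hloc⟩ := hltg _ (isMorseGauge_closeGauge hM (E := 2 * D) (by positivity))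
  obtain ⟨L, hlL⟩ := exists_nat_ge l
  have hfin : (morseSteps G x₀ D M L).Finite := finite_morseSteps hG L.cast_nonneg
  refine ⟨(L, hfin.toFinset), fun γ hγ hγM => ?_, M', hM', fun γ hγ hsteps => ?_⟩
  · rw [hfin.coe_toFinset]
    exact hγM.hasSteps_morseSteps hcob hγ.2
  · rw [hfin.coe_toFinset] at hsteps
    exact hsteps.morseOn_Ici hX L.cast_nonneg hγ.2 hloc hlL

end Action

end Space

end MorseLTG

open MorseLTG in
theorem stmt17_general {G : Type*} [Group G] {X : Type*} [MetricSpace X] [ProperSpace X]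
    [MulAction G X] (hX : GeodesicSpace X) (x₀ : X) (hG : IsGeometricAction G X)
    (hnh : ¬ GromovHyperbolic X) (hltg : GeodesicLTG X) (C₆ K₀ : ℝ) (hC₆ : 0 ≤ C₆) :
    ∃ K : ℝ, K₀ ≤ K ∧ ∃ Ms : ℕ → ℝ → ℝ, IsStrongExhaustion x₀ Ms ∧
      ∃ (β : ℕ → ℝ → X) (S : ℕ → ℝ),
        ∀ n : ℕ, 0 ≤ S n ∧ K ≤ S n ∧ GeodesicOn (Set.Icc 0 (S n)) (β n) ∧
          ¬ MorseOn (Ms n) (Set.Icc 0 (S n)) (β n) ∧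
          ¬ ContractingSet C₆ (β n '' Set.Icc 0 K) ∧
          ¬ ContractingSet C₆ (β n '' Set.Icc (S n - K) (S n)) ∧
          β n 0 ∈ MulAction.orbit G x₀ ∧ β n (S n) ∈ MulAction.orbit G x₀ := by
  obtain ⟨Ms, hMs⟩ := exists_isStrongExhaustion hX hG hltg x₀
  obtain ⟨D, hD, hcob⟩ := hG.exists_cobounded x₀
  have hdense : ∀ x, ∃ y ∈ MulAction.orbit G x₀, dist x y ≤ D := fun x =>
    let ⟨g, hg⟩ := hcob x
    ⟨g • x₀, MulAction.mem_orbit x₀ g, hg⟩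
  obtain ⟨K, hK, hsegment⟩ :=
    exists_geodesicOn_not_contractingSet_ends hX hnh hltg hD hdense hC₆ K₀
  choose β S hβ using fun n => hsegment (Ms n) (hMs.1 n)
  exact ⟨K, hK, Ms, hMs, β, S, hβ⟩

open MorseLTG in
/-- Construction of geodesic segments between orbit points that are not `M_n`-Morse and whose
initial and terminal subsegments of length `K` are not `C₆`-contracting. -/
theorem stmt17 {G : Type*} [Group G] [Group.FG G] {X : Type*} [MetricSpace X] [ProperSpace X]
    [MulAction G X] (hX : GeodesicSpace X) (x₀ : X) (hG : IsGeometricAction G X)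
    (hnh : ¬ GromovHyperbolic X) (hmltg : MLTG X)
    (C₆ K₀ : ℝ) (hC₆ : 0 ≤ C₆) (hK₀ : 0 ≤ K₀) :
    ∃ K : ℝ, K₀ ≤ K ∧ ∃ Ms : ℕ → ℝ → ℝ, IsStrongExhaustion x₀ Ms ∧
      ∃ (β : ℕ → ℝ → X) (S : ℕ → ℝ),
        ∀ n : ℕ, 0 ≤ S n ∧ K ≤ S n ∧ GeodesicOn (Set.Icc 0 (S n)) (β n) ∧
          ¬ MorseOn (Ms n) (Set.Icc 0 (S n)) (β n) ∧
          ¬ ContractingSet C₆ (β n '' Set.Icc 0 K) ∧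
          ¬ ContractingSet C₆ (β n '' Set.Icc (S n - K) (S n)) ∧
          β n 0 ∈ MulAction.orbit G x₀ ∧ β n (S n) ∈ MulAction.orbit G x₀ :=
  stmt17_general hX x₀ hG hnh hmltg.geodesicLTG C₆ K₀ hC₆
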